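/- Let n ≥ 2 and let β ≥ 0 and α be real numbers such that either (n−3)/2 < β < (n−1)/2 and α ≤ 2β − (n−3)/2, or β ≥ (n−1)/2 and α < β + 1. Then there exist γ > 0 (depending on β and α) and a constant C (depending on n, α, β and χ) such that for every Schwartz function q on ℝⁿ and every r ∈ (0,∞), ‖ χ(·) S_r(q)(·) ‖_{L²_α} ≤ C (1+r)^{−γ} ‖q‖²_{W^{β,2}_1}. -/

import Mathlib

open MeasureTheory Filter Set
open scoped ENNReal RealInnerProductSpace

noncomputable section

abbrev Euc (n : ℕ) := EuclideanSpace ℝ (Fin n)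

/-- The Japanese bracket `⟨x⟩ = (1+|x|²)^{1/2}`. -/
def jap {n : ℕ} (x : Euc n) : ℝ := Real.sqrt (1 + ‖x‖ ^ 2)

/-- The Ewald sphere measure `σ_{rη}`: the `(n-1)`-dimensional Hausdorff measure restricted
to `Γ_r(η) = {ξ : |ξ - η/2| = r|η|/2}`. -/
def ewaldM (n : ℕ) (r : ℝ) (η : Euc n) : Measure (Euc n) :=
  (MeasureTheory.Measure.hausdorffMeasure ((n : ℝ) - 1)).restrict
    (Metric.sphere ((2 : ℝ)⁻¹ • η) (r * ‖η‖ / 2))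

/-- The Fourier transform `f̂(ξ) = ∫ e^{-iξ·x} f(x) dx`. -/
def ft {n : ℕ} (f : Euc n → ℂ) (ξ : Euc n) : ℂ :=
  ∫ x : Euc n, Complex.exp (-Complex.I * ((⟪ξ, x⟫ : ℝ) : ℂ)) * f x

/-- `⟨D⟩^β f`: inverse Fourier transform of `⟨ξ⟩^β f̂(ξ)`. -/
def besselD {n : ℕ} (β : ℝ) (f : Euc n → ℂ) (x : Euc n) : ℂ :=
  (((2 * Real.pi) ^ n : ℝ)⁻¹ : ℝ) •
    ∫ ξ : Euc n, Complex.exp (Complex.I * ((⟪ξ, x⟫ : ℝ) : ℂ)) *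
      (((jap ξ ^ β : ℝ) : ℂ) * ft f ξ)

/-- The weighted Sobolev norm `‖f‖_{W^{β,2}_δ} = ‖⟨·⟩^δ ⟨D⟩^β f‖_{L²}`. -/
def wSobNorm {n : ℕ} (β δ : ℝ) (f : Euc n → ℂ) : ℝ≥0∞ :=
  eLpNorm (fun x : Euc n => (jap x ^ δ : ℝ) • besselD β f x) 2 volume

/-- The spherical operator
`S_r(q)(η) = (2/(|η|(1+r))) ∫_{Γ_r(η)} q̂(ξ) q̂(η-ξ) dσ_{rη}(ξ)`. -/
def Sr {n : ℕ} (r : ℝ) (q : Euc n → ℂ) (η : Euc n) : ℂ :=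
  ((2 / (‖η‖ * (1 + r))) : ℝ) • ∫ ξ, ft q ξ * ft q (η - ξ) ∂(ewaldM n r η)

/-- `K_r(g₁,g₂)(η) = (1/|η|) ∫_{Γ_r(η)} |g₁(ξ)||g₂(η-ξ)| dσ_{rη}(ξ)`. -/
def Kr {n : ℕ} (r : ℝ) (g₁ g₂ : Euc n → ℂ) (η : Euc n) : ℝ :=
  ‖η‖⁻¹ * ∫ ξ, ‖g₁ ξ‖ * ‖g₂ (η - ξ)‖ ∂(ewaldM n r η)

/-- surface measure on the unit sphere, as a measure on the whole space -/
def sg (n : ℕ) : Measure (Euc n) :=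
  Measure.map Subtype.val (volume : Measure (Euc n)).toSphere

instance sg_finite (n : ℕ) : IsFiniteMeasure (sg n) := by
  unfold sg; infer_instance

theorem sg_apply {n : ℕ} {s : Set (Euc n)} (hs : MeasurableSet s) :
    sg n s = n * volume {x : Euc n | x ≠ 0 ∧ ‖x‖ < 1 ∧ ‖x‖⁻¹ • x ∈ s} := by
  unfold sg
  rw [Measure.map_apply measurable_subtype_coe hs,
    Measure.toSphere_apply' _ (measurable_subtype_coe hs)]
  simp only [finrank_euclideanSpace, Fintype.card_fin]
  congr 2
  ext x
  simp only [Set.mem_smul, Set.mem_image, Set.mem_preimage, Set.mem_ofPred_eq]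
  constructor
  · rintro ⟨t, ht, y, ⟨⟨z, hz⟩, hzs, rfl⟩, rfl⟩
    simp only at hzs
    have hz1 : ‖z‖ = 1 := by simpa using hz
    have h0 : t ≠ 0 := ht.1.ne'
    have hn : ‖t • z‖ = t := by rw [norm_smul, hz1, Real.norm_of_nonneg ht.1.le, mul_one]
    refine ⟨?_, ?_, ?_⟩
    · rw [← norm_ne_zero_iff, hn]; exact h0
    · rw [hn]; exact ht.2
    · simp only [hn]; rw [smul_smul, inv_mul_cancel₀ h0, one_smul]; exact hzs
  · rintro ⟨h0, h1, h2⟩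
    have h3 : ‖x‖ ≠ 0 := norm_ne_zero_iff.2 h0
    refine ⟨‖x‖, ⟨norm_pos_iff.2 h0, h1⟩, ‖x‖⁻¹ • x, ⟨⟨‖x‖⁻¹ • x, ?_⟩, h2, rfl⟩, ?_⟩
    · simp [norm_smul, h3]
    · rw [smul_smul, mul_inv_cancel₀ h3, one_smul]

theorem sg_map {n : ℕ} (U : Euc n ≃ₗᵢ[ℝ] Euc n) : Measure.map U (sg n) = sg n := by
  ext s hs
  have hU : Measurable U := U.continuous.measurable
  rw [Measure.map_apply hU hs, sg_apply hs, sg_apply (hU hs)]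
  congr 1
  have hmp := U.measurePreserving
  have hm : MeasurableSet {x : Euc n | x ≠ 0 ∧ ‖x‖ < 1 ∧ ‖x‖⁻¹ • x ∈ s} := by
    refine MeasurableSet.inter (measurableSet_singleton 0).compl
      (MeasurableSet.inter (measurableSet_lt measurable_norm measurable_const) ?_)
    exact (measurable_norm.inv.smul measurable_id) hs
  rw [← hmp.measure_preimage hm.nullMeasurableSet]
  congr 1
  ext x
  simp

theorem sg_ae {n : ℕ} : ∀ᵐ x ∂(sg n), ‖x‖ = 1 := by
  unfold sg
  rw [ae_map_iff measurable_subtype_coe.aemeasurable (measurableSet_eq_fun measurable_norm measurable_const)]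
  exact Eventually.of_forall fun x => by simp

theorem polar {n : ℕ} (hn : 1 ≤ n) {f : Euc n → ℝ≥0∞} (hf : Measurable f) :
    ∫⁻ x, f x = ∫⁻ θ, (∫⁻ t in Ioi (0:ℝ), ENNReal.ofReal (t ^ (n - 1)) * f (t • θ)) ∂(sg n) := by
  have : Nontrivial (Euc n) := by
    have : Nonempty (Fin n) := ⟨⟨0, hn⟩⟩
    infer_instance
  have key := (volume : Measure (Euc n)).measurePreserving_homeomorphUnitSphereProd
  have hF : Measurable (fun p : Metric.sphere (0 : Euc n) 1 × Ioi (0:ℝ) => f (p.2.1 • p.1.1)) := by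
    apply hf.comp
    fun_prop
  have h1 := key.lintegral_comp hF
  have h2 : ∫⁻ x, f x = ∫⁻ x : ({(0)}ᶜ : Set (Euc n)), f x ∂((volume : Measure (Euc n)).comap (↑)) := by
    rw [lintegral_subtype_comap (measurableSet_singleton _).compl fun x ↦ f x, restrict_compl_singleton]
  rw [h2]
  have h3 : ∀ x : ({(0)}ᶜ : Set (Euc n)), f (((homeomorphUnitSphereProd (Euc n)) x).2.1 • ((homeomorphUnitSphereProd (Euc n)) x).1.1) = f x := by
    intro x
    have hx : ‖x.1‖ ≠ 0 := norm_ne_zero_iff.2 x.2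
    simp only [homeomorphUnitSphereProd_apply_snd_coe, homeomorphUnitSphereProd_apply_fst_coe, smul_smul, mul_inv_cancel₀ hx, one_smul]
  simp only [h3] at h1
  rw [h1, lintegral_prod _ hF.aemeasurable]
  simp only [finrank_euclideanSpace, Fintype.card_fin]
  have hmeas : Measurable (fun θ : Euc n => ∫⁻ t in Ioi (0:ℝ), ENNReal.ofReal (t ^ (n - 1)) * f (t • θ)) := by
    apply Measurable.lintegral_prod_right'
      (f := fun p : Euc n × ℝ => ENNReal.ofReal (p.2 ^ (n - 1)) * f (p.2 • p.1))
    refine Measurable.mul (by fun_prop) (hf.comp (by fun_prop))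
  unfold sg
  rw [lintegral_map hmeas measurable_subtype_coe]
  refine lintegral_congr fun θ => ?_
  unfold Measure.volumeIoiPow
  rw [lintegral_withDensity_eq_lintegral_mul _ (by fun_prop)
    (show Measurable (fun y : Ioi (0:ℝ) => f (y.1 • θ.1)) from hf.comp (by fun_prop))]
  simp only [Pi.mul_apply]
  rw [lintegral_subtype_comap measurableSet_Ioi fun a : ℝ ↦ ENNReal.ofReal (a ^ (n - 1)) * f (a • θ.1)]

theorem eilenberg {n : ℕ} (hn : 2 ≤ n) {A : Set (Euc n)} (hA : ∀ x ∈ A, ‖x‖ = 1) :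
    Measure.hausdorffMeasure ((n:ℝ) - 1) A ≤
      2 * 2 ^ ((n:ℝ) - 1) * Measure.hausdorffMeasure (n : ℝ)
        {x : Euc n | x ≠ 0 ∧ ‖x‖ < 1 ∧ ‖x‖⁻¹ • x ∈ A} := by
  have hn1 : (0:ℝ) ≤ (n:ℝ) - 1 := by
    have : (2:ℝ) ≤ n := by exact_mod_cast hn
    linarith
  have hpow : ∀ d : ℝ≥0∞, d ^ ((n:ℝ) - 1) * d = d ^ (n:ℝ) := by
    intro d
    conv_lhs => rw [← ENNReal.rpow_one d, ← ENNReal.rpow_mul, ← ENNReal.rpow_add_of_nonneg _ _ (by linarith) zero_le_one]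
    congr 1
    ring
  rw [Measure.hausdorffMeasure_apply]
  refine iSup₂_le fun ε hε => ?_
  set P := ⨅ (t : ℕ → Set (Euc n)) (_ : A ⊆ iUnion t) (_ : ∀ n, Metric.ediam (t n) ≤ ε),
          ∑' i, ⨆ _ : (t i).Nonempty, (Metric.ediam (t i)) ^ ((n:ℝ)-1) with hP
  set K := {x : Euc n | x ≠ 0 ∧ ‖x‖ < 1 ∧ ‖x‖⁻¹ • x ∈ A} with hK
  have hstep : ∀ U : ℕ → Set (Euc n), K ⊆ iUnion U → (∀ i, Metric.ediam (U i) ≤ ε / 2) →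
      P ≤ 2 * 2 ^ ((n:ℝ) - 1) * ∑' i, ⨆ _ : (U i).Nonempty, (Metric.ediam (U i)) ^ (n:ℝ) := by
    intro U hU hd
    let J : ℕ → Set ℝ := fun i => toMeasurable volume (norm '' (U i))
    have hJm : ∀ i, MeasurableSet (J i) := fun i => measurableSet_toMeasurable _ _
    have hJv : ∀ i, volume (J i) ≤ Metric.ediam (U i) := by
      intro i
      rw [measure_toMeasurable]
      refine (Real.volume_le_diam _).trans ?_
      refine (lipschitzWith_one_norm.ediam_image_le _).trans ?_
      simp
    have hpt : ∀ t ∈ Ioo (1/2:ℝ) 1, P ≤ ∑' i, (J i).indicator (fun _ => (2 * Metric.ediam (U i)) ^ ((n:ℝ)-1)) t := by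
      intro t ht
      have ht0 : 0 < t := by linarith [ht.1]
      let V : ℕ → Set (Euc n) := fun i => A ∩ {a | t • a ∈ U i}
      have hVd : ∀ i, Metric.ediam (V i) ≤ 2 * Metric.ediam (U i) := by
        intro i
        refine Metric.ediam_le fun x hx y hy => ?_
        have h1 : edist (t • x) (t • y) ≤ Metric.ediam (U i) := Metric.edist_le_ediam_of_mem hx.2 hy.2
        calc edist x y ≤ 2 * edist (t • x) (t • y) := by
              rw [edist_smul₀, ENNReal.smul_def, smul_eq_mul, ← mul_assoc]
              refine le_mul_of_one_le_left' ?_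
              have : (1:NNReal) ≤ 2 * ‖t‖₊ := by
                rw [← NNReal.coe_le_coe]; push_cast
                rw [Real.norm_of_nonneg ht0.le]; linarith [ht.1]
              exact_mod_cast this
          _ ≤ _ := by gcongr
      have hVc : A ⊆ iUnion V := by
        intro a ha
        have h1 : t • a ∈ K := by
          have hna : ‖t • a‖ = t := by rw [norm_smul, hA a ha, Real.norm_of_nonneg ht0.le, mul_one]
          refine ⟨?_, ?_, ?_⟩
          · rw [← norm_ne_zero_iff, hna]; exact ht0.ne'
          · rw [hna]; exact ht.2
          · rw [hna, smul_smul, inv_mul_cancel₀ ht0.ne', one_smul]; exact ha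
        obtain ⟨i, hi⟩ := mem_iUnion.1 (hU h1)
        exact mem_iUnion.2 ⟨i, ha, hi⟩
      have hVe : ∀ i, Metric.ediam (V i) ≤ ε := by
        intro i
        refine (hVd i).trans ?_
        calc 2 * Metric.ediam (U i) ≤ 2 * (ε / 2) := by gcongr; exact hd i
          _ = ε := ENNReal.mul_div_cancel (by simp) (by simp)
      have hle : P ≤ ∑' i, ⨆ _ : (V i).Nonempty, (Metric.ediam (V i)) ^ ((n:ℝ)-1) :=
        iInf_le_of_le V (iInf₂_le hVc hVe)
      refine hle.trans ?_
      refine ENNReal.tsum_le_tsum fun i => ?_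
      refine iSup_le fun hne => ?_
      obtain ⟨a, ha, hta⟩ := hne
      have : t ∈ J i := by
        apply subset_toMeasurable
        refine ⟨t • a, hta, ?_⟩
        rw [norm_smul, hA a ha, Real.norm_of_nonneg ht0.le, mul_one]
      rw [indicator_of_mem this]
      gcongr
      exact hVd i
    have hvol : volume (Ioo (1/2:ℝ) 1) = 2⁻¹ := by
      rw [Real.volume_Ioo, show (1 - 1/2 : ℝ) = 2⁻¹ by norm_num]
      rw [ENNReal.ofReal_inv_of_pos (by norm_num)]; simp
    have h1 : P * 2⁻¹ ≤ ∑' i, (2 * Metric.ediam (U i)) ^ ((n:ℝ)-1) * volume (J i) := by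
      calc P * 2⁻¹ = ∫⁻ t in Ioo (1/2:ℝ) 1, P := by rw [setLIntegral_const, hvol]
        _ ≤ ∫⁻ t in Ioo (1/2:ℝ) 1, ∑' i, (J i).indicator (fun _ => (2 * Metric.ediam (U i)) ^ ((n:ℝ)-1)) t :=
            setLIntegral_mono' measurableSet_Ioo hpt
        _ ≤ ∫⁻ t : ℝ, ∑' i, (J i).indicator (fun _ => (2 * Metric.ediam (U i)) ^ ((n:ℝ)-1)) t :=
            setLIntegral_le_lintegral _ _
        _ = _ := by
            rw [lintegral_tsum (fun i => (measurable_const.indicator (hJm i)).aemeasurable)]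
            congr 1; ext i
            rw [lintegral_indicator_const (hJm i)]
    have h2 : P ≤ 2 * ∑' i, (2 * Metric.ediam (U i)) ^ ((n:ℝ)-1) * volume (J i) := by
      calc P = 2 * (P * 2⁻¹) := by
            rw [mul_comm P, ← mul_assoc, ENNReal.mul_inv_cancel (by simp) (by simp), one_mul]
        _ ≤ _ := by gcongr
    refine h2.trans ?_
    rw [mul_assoc]
    gcongr
    rw [← ENNReal.tsum_mul_left]
    refine ENNReal.tsum_le_tsum fun i => ?_
    by_cases hne : (U i).Nonempty
    · rw [ENNReal.mul_rpow_of_nonneg _ _ hn1, mul_assoc, iSup_pos hne]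
      gcongr
      rw [← hpow]
      gcongr
      exact hJv i
    · have : U i = ∅ := not_nonempty_iff_eq_empty.1 hne
      have h3 : volume (J i) = 0 := by
        simp only [J, this, image_empty, measure_toMeasurable, measure_empty]
      rw [h3, mul_zero]; exact zero_le
  rw [Measure.hausdorffMeasure_apply]
  have hc0 : (2 * 2 ^ ((n:ℝ) - 1) : ℝ≥0∞) ≠ 0 := by
    simp
  have hct : (2 * 2 ^ ((n:ℝ) - 1) : ℝ≥0∞) ≠ ⊤ := 
    ENNReal.mul_ne_top (by simp) (ENNReal.rpow_ne_top_of_nonneg hn1 (by simp))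
  rw [mul_comm]
  refine (ENNReal.div_le_iff_le_mul (Or.inl hc0) (Or.inl hct)).1 ?_
  refine le_iSup₂_of_le (ε / 2) (ENNReal.half_pos hε.ne') ?_
  refine le_iInf fun U => le_iInf fun hU => le_iInf fun hd => ?_
  rw [ENNReal.div_le_iff_le_mul (Or.inl hc0) (Or.inl hct), mul_comm]
  exact hstep U hU hd

theorem sphere_bound {n : ℕ} (hn : 2 ≤ n) : ∃ C : ℝ≥0∞, C ≠ ⊤ ∧
    ∀ s : Set (Euc n), MeasurableSet s → (∀ x ∈ s, ‖x‖ = 1) →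
      Measure.hausdorffMeasure ((n:ℝ) - 1) s ≤ C * sg n s := by
  have h := Measure.isAddLeftInvariant_eq_smul (Measure.hausdorffMeasure (n:ℝ) : Measure (Euc n)) volume
  set c := (Measure.hausdorffMeasure (n:ℝ) : Measure (Euc n)).addHaarScalarFactor volume
  refine ⟨2 * 2 ^ ((n:ℝ) - 1) * c, ?_, ?_⟩
  · refine ENNReal.mul_ne_top (ENNReal.mul_ne_top (by simp) (ENNReal.rpow_ne_top_of_nonneg ?_ (by simp))) (by simp)
    have : (2:ℝ) ≤ n := by exact_mod_cast hn
    linarith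
  · intro s hs hs1
    refine (eilenberg hn hs1).trans ?_
    rw [h, sg_apply hs, Measure.smul_apply, ENNReal.smul_def, smul_eq_mul, ← mul_assoc]
    refine mul_le_mul_right ?_ _
    refine le_mul_of_one_le_left' ?_
    exact_mod_cast (by omega : 1 ≤ n)

theorem sphere_lint {n : ℕ} (hn : 2 ≤ n) : ∃ C : ℝ≥0∞, C ≠ ⊤ ∧
    ∀ (y : Euc n) (R : ℝ), 0 < R → ∀ F : Euc n → ℝ≥0∞, Measurable F →
      ∫⁻ x in Metric.sphere y R, F x ∂(Measure.hausdorffMeasure ((n:ℝ) - 1)) ≤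
        C * ENNReal.ofReal (R ^ (n-1)) * ∫⁻ θ, F (y + R • θ) ∂(sg n) := by
  obtain ⟨C, hC, h⟩ := sphere_bound hn
  refine ⟨C, hC, ?_⟩
  intro y R hR F hF
  have hn1 : (0:ℝ) ≤ (n:ℝ) - 1 := by
    have : (2:ℝ) ≤ n := by exact_mod_cast hn
    linarith
  have hm : Measurable (fun θ : Euc n => y + R • θ) := by fun_prop
  have hle : (Measure.hausdorffMeasure ((n:ℝ) - 1)).restrict (Metric.sphere y R) ≤
      (C * ENNReal.ofReal (R ^ (n-1))) • Measure.map (fun θ : Euc n => y + R • θ) (sg n) := by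
    refine Measure.le_iff.2 fun s hs => ?_
    rw [Measure.restrict_apply hs, Measure.smul_apply, Measure.map_apply hm hs, smul_eq_mul]
    set A : Set (Euc n) := (fun θ : Euc n => y + R • θ) ⁻¹' s ∩ Metric.sphere 0 1 with hA
    have himg : s ∩ Metric.sphere y R ⊆ (fun θ : Euc n => y + R • θ) '' A := by
      rintro x ⟨hxs, hx⟩
      have e : y + R • (R⁻¹ • (x - y)) = x := by
        rw [smul_smul, mul_inv_cancel₀ hR.ne', one_smul]; abel
      refine ⟨R⁻¹ • (x - y), ⟨?_, ?_⟩, e⟩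
      · simp only [mem_preimage, e]; exact hxs
      · rw [mem_sphere_iff_norm] at hx ⊢
        rw [sub_zero, norm_smul, hx, norm_inv, Real.norm_of_nonneg hR.le, inv_mul_cancel₀ hR.ne']
    have hlip : LipschitzWith R.toNNReal (fun θ : Euc n => y + R • θ) := by
      refine LipschitzWith.of_dist_le_mul fun a b => ?_
      rw [dist_add_left, dist_smul₀, Real.norm_of_nonneg hR.le, Real.coe_toNNReal _ hR.le]
    refine (measure_mono himg).trans ((hlip.hausdorffMeasure_image_le hn1 A).trans ?_)
    have e2 : ((R.toNNReal : ℝ≥0∞)) ^ ((n:ℝ) - 1) = ENNReal.ofReal (R ^ (n-1)) := by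
      rw [ENNReal.ofReal_pow hR.le, ← ENNReal.rpow_natCast, Nat.cast_sub (by omega), Nat.cast_one]
      rfl
    rw [e2, mul_comm C, mul_assoc]
    gcongr
    refine (h A ((hm hs).inter Metric.isClosed_sphere.measurableSet) (fun x hx => by simpa using hx.2)).trans ?_
    gcongr
    exact inter_subset_left
  calc _ ≤ ∫⁻ x, F x ∂((C * ENNReal.ofReal (R ^ (n-1))) • Measure.map (fun θ : Euc n => y + R • θ) (sg n)) :=
        lintegral_mono' hle le_rfl
    _ = _ := by rw [lintegral_smul_measure, lintegral_map hF hm, smul_eq_mul]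

theorem exists_rot {n : ℕ} {v w : Euc n} (h : ‖v‖ = ‖w‖) : ∃ U : Euc n ≃ₗᵢ[ℝ] Euc n, U v = w :=
  ⟨_, Submodule.reflection_sub h⟩

theorem sg_ball {n : ℕ} (hn : 2 ≤ n) : ∃ C : ℝ≥0∞, C ≠ ⊤ ∧ ∀ (ω : Euc n), ‖ω‖ = 1 →
    ∀ ε : ℝ, 0 < ε → sg n (Metric.ball ω ε) ≤ C * ENNReal.ofReal (ε ^ (n-1)) := by
  obtain ⟨m, rfl⟩ : ∃ m, n = m + 1 := ⟨n - 1, by omega⟩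
  refine ⟨(m+1 : ℕ) * (2 * 2 ^ m), ?_, ?_⟩
  · exact ENNReal.mul_ne_top (by simp) (ENNReal.mul_ne_top (by simp) (by simp))
  intro ω hω ε hε
  set e : Euc (m+1) := EuclideanSpace.single 0 1 with he
  have hen : ‖e‖ = 1 := by simp [he]
  obtain ⟨U, hU⟩ := exists_rot (hω.trans hen.symm)
  have h1 : sg (m+1) (Metric.ball ω ε) = sg (m+1) (Metric.ball e ε) := by
    conv_rhs => rw [← sg_map U]
    rw [Measure.map_apply U.continuous.measurable measurableSet_ball]
    congr 1
    ext x
    rw [mem_preimage, Metric.mem_ball, Metric.mem_ball, ← hU, U.dist_map]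
  rw [h1, sg_apply measurableSet_ball, mul_assoc]
  gcongr
  set b : Fin (m+1) → ℝ := Fin.cons 1 (fun _ => ε) with hb
  have hsub : {x : Euc (m+1) | x ≠ 0 ∧ ‖x‖ < 1 ∧ ‖x‖⁻¹ • x ∈ Metric.ball e ε} ⊆
      (WithLp.ofLp) ⁻¹' (Set.pi univ fun i => Icc (- b i) (b i)) := by
    rintro x ⟨h0, h1, h2⟩ i -
    show - b i ≤ x i ∧ x i ≤ b i
    rw [← abs_le]
    have h3 : 0 < ‖x‖ := norm_pos_iff.2 h0
    refine Fin.cases ?_ (fun j => ?_) i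
    · simp only [hb, Fin.cons_zero]
      exact (PiLp.norm_apply_le x 0).trans h1.le
    · simp only [hb, Fin.cons_succ]
      have h4 := PiLp.norm_apply_le (‖x‖⁻¹ • x - e) j.succ
      rw [mem_ball_iff_norm] at h2
      have h5 : (‖x‖⁻¹ • x - e) j.succ = ‖x‖⁻¹ * x j.succ := by simp [he]
      rw [h5, norm_mul, norm_inv, norm_norm] at h4
      have h6 : ‖x j.succ‖ = ‖x‖ * (‖x‖⁻¹ * ‖x j.succ‖) := by field_simp
      calc |x j.succ| = ‖x‖ * (‖x‖⁻¹ * ‖x j.succ‖) := h6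
        _ ≤ 1 * ε := by
            refine mul_le_mul h1.le (h4.trans h2.le) (by positivity) zero_le_one
        _ = ε := one_mul _
  refine (measure_mono hsub).trans ?_
  have hmp := PiLp.volume_preserving_ofLp (Fin (m+1))
  rw [hmp.measure_preimage (MeasurableSet.univ_pi fun i => measurableSet_Icc).nullMeasurableSet, volume_pi_pi]
  simp only [Real.volume_Icc]
  rw [Fin.prod_univ_succ]
  simp only [hb, Fin.cons_zero, Fin.cons_succ, Finset.prod_const, Finset.card_univ, Fintype.card_fin]
  rw [mul_assoc]
  refine mul_le_mul' ?_ ?_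
  · norm_num
  · rw [Nat.add_sub_cancel, ENNReal.ofReal_pow hε.le, ← mul_pow]
    gcongr
    rw [show ε - -ε = 2 * ε by ring, ENNReal.ofReal_mul (by norm_num)]
    simp

theorem sg_sing {n : ℕ} (hn : 2 ≤ n) {s : ℝ} (hs0 : 0 ≤ s) (hs : s < (n:ℝ) - 1) :
    ∃ C : ℝ≥0∞, C ≠ ⊤ ∧ ∀ (ω : Euc n), ‖ω‖ = 1 →
      ∫⁻ θ, (‖θ - ω‖ₑ) ^ (-s) ∂(sg n) ≤ C := by
  obtain ⟨C, hC, h⟩ := sg_ball hn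
  set a : ℝ≥0∞ := 2 ^ s with ha
  have hρ : a * (2⁻¹ : ℝ≥0∞) ^ (n-1) < 1 := by
    rw [← ENNReal.rpow_natCast, ENNReal.inv_rpow, ← ENNReal.rpow_neg, ha,
      ← ENNReal.rpow_add _ _ (by simp) (by simp), Nat.cast_sub (by omega)]
    apply ENNReal.rpow_lt_one_of_one_lt_of_neg (by norm_num)
    push_cast; linarith
  refine ⟨C * 4 ^ (n-1) * (1 - a * (2⁻¹ : ℝ≥0∞) ^ (n-1))⁻¹, ?_, ?_⟩
  · refine ENNReal.mul_ne_top (ENNReal.mul_ne_top hC (by simp)) ?_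
    rw [ENNReal.inv_ne_top]
    exact (tsub_pos_of_lt hρ).ne'
  intro ω hω
  have hpt : ∀ θ : Euc n, ‖θ‖ = 1 → (‖θ - ω‖ₑ) ^ (-s) ≤
      ∑' k : ℕ, (Metric.ball ω (4 * (1/2)^k)).indicator (fun _ => a ^ k) θ := by
    intro θ hθ
    by_cases hd : θ = ω
    · have : ∀ k : ℕ, (1:ℝ≥0∞) ≤ (Metric.ball ω (4 * (1/2)^k)).indicator (fun _ => a ^ k) θ := by
        intro k
        rw [indicator_of_mem]
        · refine one_le_pow₀ ?_
          rw [ha]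
          rcases hs0.eq_or_lt with h0 | h0
          · rw [← h0, ENNReal.rpow_zero]
          · exact ENNReal.one_le_rpow (by norm_num) h0
        · rw [hd]; exact Metric.mem_ball_self (by positivity)
      calc _ ≤ (⊤ : ℝ≥0∞) := le_top
        _ = ∑' k : ℕ, (1:ℝ≥0∞) := by rw [ENNReal.tsum_const_eq_top_of_ne_zero one_ne_zero]
        _ ≤ _ := ENNReal.tsum_le_tsum this
    · have hpos : 0 < ‖θ - ω‖ := norm_pos_iff.2 (sub_ne_zero.2 hd)
      have hle : ‖θ - ω‖ ≤ 2 := (norm_sub_le _ _).trans (by rw [hθ, hω]; norm_num)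
      obtain ⟨k, hk1, hk2⟩ := exists_nat_pow_near_of_lt_one (x := ‖θ - ω‖ / 2) (y := (1/2:ℝ)) (by positivity)
        (by linarith) (by norm_num) (by norm_num)
      refine le_trans ?_ (ENNReal.le_tsum k)
      rw [indicator_of_mem]
      · have h1 : (1/2:ℝ)^k ≤ ‖θ - ω‖ := by
          rw [pow_succ] at hk1; linarith
        have h2 : (2⁻¹ : ℝ≥0∞) ^ k ≤ ‖θ - ω‖ₑ := by
          rw [← ofReal_norm]
          refine le_trans (le_of_eq ?_) (ENNReal.ofReal_le_ofReal h1)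
          rw [ENNReal.ofReal_pow (by norm_num), one_div, ENNReal.ofReal_inv_of_pos (by norm_num)]
          simp
        rw [ENNReal.rpow_neg, ← ENNReal.inv_rpow]
        calc (‖θ - ω‖ₑ)⁻¹ ^ s ≤ (((2⁻¹ : ℝ≥0∞) ^ k)⁻¹) ^ s := by
              gcongr
          _ = a ^ k := by
              rw [ENNReal.inv_pow, inv_inv, ha, ← ENNReal.rpow_natCast, ← ENNReal.rpow_natCast, ← ENNReal.rpow_mul, ← ENNReal.rpow_mul, mul_comm]
      · rw [mem_ball_iff_norm]
        have : (0:ℝ) < (1/2:ℝ)^k := by positivity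
        linarith
  calc ∫⁻ θ, (‖θ - ω‖ₑ) ^ (-s) ∂(sg n) ≤ ∫⁻ θ, ∑' k : ℕ, (Metric.ball ω (4 * (1/2)^k)).indicator (fun _ => a ^ k) θ ∂(sg n) := by
        refine lintegral_mono_ae ?_
        filter_upwards [sg_ae] with θ hθ using hpt θ hθ
    _ = ∑' k : ℕ, a ^ k * sg n (Metric.ball ω (4 * (1/2)^k)) := by
        rw [lintegral_tsum (fun i => (measurable_const.indicator measurableSet_ball).aemeasurable)]
        congr 1; ext k
        rw [lintegral_indicator_const measurableSet_ball]
    _ ≤ ∑' k : ℕ, C * 4 ^ (n-1) * (a * (2⁻¹ : ℝ≥0∞) ^ (n-1)) ^ k := by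
        refine ENNReal.tsum_le_tsum fun k => ?_
        refine (mul_le_mul_right (h ω hω _ (by positivity)) _).trans (le_of_eq ?_)
        rw [mul_pow, ENNReal.ofReal_mul (by positivity), ENNReal.ofReal_pow (by norm_num), ENNReal.ofReal_pow (by positivity),
          ENNReal.ofReal_pow (by norm_num), one_div, ENNReal.ofReal_inv_of_pos (by norm_num)]
        rw [mul_pow, ← pow_mul, ← pow_mul, mul_comm k (n-1)]
        simp only [ENNReal.ofReal_ofNat]
        ring
    _ = _ := by rw [ENNReal.tsum_mul_left, ENNReal.tsum_geometric]

theorem jac_deriv {n : ℕ} (r : ℝ) (θ η : Euc n) (hη : η ≠ 0) :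
    HasFDerivAt (fun η : Euc n => (2⁻¹:ℝ) • (η - (r * ‖η‖) • θ))
      ((2⁻¹:ℝ) • (ContinuousLinearMap.id ℝ (Euc n) -
        ((r * ‖η‖⁻¹) • innerSL ℝ η).smulRight θ)) η := by
  have h1 : HasFDerivAt (fun η : Euc n => ‖η‖) (‖η‖⁻¹ • innerSL ℝ η) η := by
    have h := ((hasStrictFDerivAt_norm_sq η).hasFDerivAt).sqrt
      (by positivity)
    have e : (fun y : Euc n => √(‖y‖ ^ 2)) = fun y => ‖y‖ := by
      ext y; exact Real.sqrt_sq (norm_nonneg y)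
    rw [e] at h
    convert! h using 1
    rw [Real.sqrt_sq (norm_nonneg _)]
    ext v
    have : ‖η‖ ≠ 0 := norm_ne_zero_iff.2 hη
    simp
    field_simp
  have h2 := ((hasFDerivAt_id η).sub ((h1.const_mul r).smul_const θ)).const_smul (2⁻¹:ℝ)
  convert! h2 using 1
  rw [smul_smul]

theorem jac_det {n : ℕ} (r : ℝ) (θ η : Euc n) :
    ((2⁻¹:ℝ) • (ContinuousLinearMap.id ℝ (Euc n) -
        ((r * ‖η‖⁻¹) • innerSL ℝ η).smulRight θ)).det =
      (2⁻¹:ℝ)^n * (1 - r * ‖η‖⁻¹ * ⟪η, θ⟫) := by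
  have h := LinearMap.transvection.det
    (-((r * ‖η‖⁻¹) • (innerSL ℝ η : Euc n →ₗ[ℝ] ℝ))) θ
  have e : (((2⁻¹:ℝ) • (ContinuousLinearMap.id ℝ (Euc n) -
        ((r * ‖η‖⁻¹) • innerSL ℝ η).smulRight θ) : Euc n →L[ℝ] Euc n) : Euc n →ₗ[ℝ] Euc n) =
      (2⁻¹:ℝ) • LinearMap.transvection (-((r * ‖η‖⁻¹) • (innerSL ℝ η : Euc n →ₗ[ℝ] ℝ))) θ := by
    ext v
    simp [LinearMap.transvection.apply, sub_eq_add_neg]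
  rw [ContinuousLinearMap.det, e, LinearMap.det_smul, h]
  simp [sub_eq_add_neg]

theorem jac_inj {n : ℕ} (r : ℝ) (hr : 0 < r) (θ : Euc n) (hθ : ‖θ‖ = 1) :
    InjOn (fun η : Euc n => (2⁻¹:ℝ) • (η - (r * ‖η‖) • θ)) {η | η ≠ 0 ∧ ⟪η, θ⟫ ≤ 0} := by
  have key : ∀ η η' : Euc n, ⟪η, θ⟫ ≤ 0 → η - (r * ‖η‖) • θ = η' - (r * ‖η'‖) • θ →
      ‖η‖ ≤ ‖η'‖ := by
    intro η η' h1 h2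
    by_contra! h3
    have h4 : η' = η - (r * (‖η‖ - ‖η'‖)) • θ := by
      rw [mul_sub, sub_smul]
      rw [sub_eq_sub_iff_add_eq_add] at h2
      rw [← sub_add, eq_comm, sub_add_eq_add_sub, sub_eq_iff_eq_add]
      exact h2
    have h5 : ‖η'‖^2 = ‖η‖^2 - 2 * (r * (‖η‖ - ‖η'‖)) * ⟪η, θ⟫ + (r * (‖η‖ - ‖η'‖))^2 := by
      nth_rw 1 [h4]
      rw [norm_sub_sq_real, inner_smul_right, norm_smul, hθ, mul_one, Real.norm_eq_abs, sq_abs]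
      ring
    have h6 : 0 < r * (‖η‖ - ‖η'‖) := mul_pos hr (by linarith)
    nlinarith [norm_nonneg η, norm_nonneg η', mul_nonneg h6.le (neg_nonneg.2 h1)]
  rintro η ⟨-, h1⟩ η' ⟨-, h2⟩ h
  have h3 : η - (r * ‖η‖) • θ = η' - (r * ‖η'‖) • θ :=
    smul_right_injective _ (by norm_num : (2⁻¹:ℝ) ≠ 0) h
  have h4 := le_antisymm (key _ _ h1 h3) (key _ _ h2 h3.symm)
  rw [h4] at h3
  exact sub_left_injective h3

theorem jac {n : ℕ} (r : ℝ) (hr : 0 < r) (θ : Euc n) (hθ : ‖θ‖ = 1) (G : Euc n → ℝ≥0∞) :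
    ∫⁻ η in {η : Euc n | η ≠ 0 ∧ ⟪η, θ⟫ ≤ 0}, G ((2⁻¹:ℝ) • (η - (r * ‖η‖) • θ)) ≤
      2 ^ n * ∫⁻ x, G x := by
  have hs : MeasurableSet {η : Euc n | η ≠ 0 ∧ ⟪η, θ⟫ ≤ 0} := by
    apply MeasurableSet.inter
    · exact (measurableSet_singleton 0).compl
    · exact (isClosed_le (f := fun η : Euc n => ⟪η, θ⟫) (g := fun _ => (0:ℝ)) (by fun_prop) (by fun_prop)).measurableSet
  have h := lintegral_image_eq_lintegral_abs_det_fderiv_mul volume hs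
    (fun η hη => (jac_deriv r θ η hη.1).hasFDerivWithinAt) (jac_inj r hr θ hθ) G
  calc _ ≤ ∫⁻ η in {η : Euc n | η ≠ 0 ∧ ⟪η, θ⟫ ≤ 0}, 2 ^ n * (ENNReal.ofReal |((2⁻¹:ℝ) • (ContinuousLinearMap.id ℝ (Euc n) -
        ((r * ‖η‖⁻¹) • innerSL ℝ η).smulRight θ)).det| * G ((2⁻¹:ℝ) • (η - (r * ‖η‖) • θ))) := by
        refine setLIntegral_mono' hs ?_
        intro η hη
        rw [jac_det, ← mul_assoc]
        have h1 : (1:ℝ≥0∞) ≤ 2 ^ n * ENNReal.ofReal |(2⁻¹:ℝ)^n * (1 - r * ‖η‖⁻¹ * ⟪η, θ⟫)| := by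
          have : (2:ℝ≥0∞)^n = ENNReal.ofReal (2^n) := by
            rw [ENNReal.ofReal_pow (by norm_num)]; simp
          rw [this, ← ENNReal.ofReal_mul (by positivity), ENNReal.one_le_ofReal, abs_mul,
            abs_of_pos (by positivity), ← mul_assoc, ← mul_pow]
          norm_num
          refine le_trans ?_ (le_abs_self _)
          have : 0 ≤ r * ‖η‖⁻¹ * (-⟪η, θ⟫) := by
            have := neg_nonneg.2 hη.2
            positivity
          linarith
        calc _ = 1 * G _ := (one_mul _).symm
          _ ≤ _ := by gcongr
    _ = 2 ^ n * ∫⁻ x in (fun η : Euc n => (2⁻¹:ℝ) • (η - (r * ‖η‖) • θ)) '' {η : Euc n | η ≠ 0 ∧ ⟪η, θ⟫ ≤ 0}, G x := by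
        rw [lintegral_const_mul' _ _ (by simp), ← h]
    _ ≤ _ := by
        gcongr
        exact Measure.restrict_le_self

theorem trace_pt {n : ℕ} (g : SchwartzMap (Euc n) ℂ) (y θ : Euc n) (hθ : ‖θ‖ = 1) (R : ℝ) :
    ‖g (y + R • θ)‖ₑ ^ 2 ≤ ∫⁻ t in Ioi R,
      (‖g (y + t • θ)‖ₑ ^ 2 + ‖fderiv ℝ g (y + t • θ)‖ₑ ^ 2) := by
  set φ : ℝ → ℝ := fun t => ‖g (y + t • θ)‖ ^ 2 with hφ
  set D : ℝ → ℂ := fun t => fderiv ℝ g (y + t • θ) θ with hD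
  have hl : ∀ t, HasDerivAt (fun t : ℝ => y + t • θ) θ t := by
    intro t
    simpa using ((hasDerivAt_id t).smul_const θ).const_add y
  have hg : ∀ t, HasDerivAt (fun t : ℝ => g (y + t • θ)) (D t) t := by
    intro t
    exact (g.differentiableAt.hasFDerivAt (x := y + t • θ)).comp_hasDerivAt t (hl t)
  have hd : ∀ t, HasDerivAt φ (2 * ⟪g (y + t • θ), D t⟫) t := fun t => (hg t).norm_sq
  have hDc : Continuous D := by
    have : Continuous (fderiv ℝ g) := (g.smooth 1).continuous_fderiv (by norm_num)
    simp only [hD]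
    fun_prop
  have hc : Continuous (fun t => 2 * ⟪g (y + t • θ), D t⟫) := by
    have := g.continuous
    fun_prop
  have hb : ∀ t, ‖2 * ⟪g (y + t • θ), D t⟫‖ₑ ≤
      ‖g (y + t • θ)‖ₑ ^ 2 + ‖fderiv ℝ g (y + t • θ)‖ₑ ^ 2 := by
    intro t
    have h1 : ‖2 * ⟪g (y + t • θ), D t⟫‖ ≤ ‖g (y + t • θ)‖^2 + ‖fderiv ℝ g (y + t • θ)‖^2 := by
      have h2 : ‖D t‖ ≤ ‖fderiv ℝ g (y + t • θ)‖ := by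
        simpa [hθ] using (fderiv ℝ g (y + t • θ)).le_opNorm θ
      have h3 := norm_inner_le_norm (𝕜 := ℝ) (g (y + t • θ)) (D t)
      rw [norm_mul]
      norm_num at h3 ⊢
      nlinarith [sq_nonneg (‖g (y + t • θ)‖ - ‖D t‖), norm_nonneg (D t)]
    have h4 := ENNReal.ofReal_le_ofReal h1
    rw [ENNReal.ofReal_add (by positivity) (by positivity), ENNReal.ofReal_pow (norm_nonneg _),
      ENNReal.ofReal_pow (norm_nonneg _)] at h4
    simpa only [ofReal_norm] using h4
  have hT : ∀ T, R ≤ T → ‖g (y + R • θ)‖ₑ ^ 2 ≤ ENNReal.ofReal (φ T) + ∫⁻ t in Ioi R,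
      (‖g (y + t • θ)‖ₑ ^ 2 + ‖fderiv ℝ g (y + t • θ)‖ₑ ^ 2) := by
    intro T hRT
    have h1 := intervalIntegral.integral_eq_sub_of_hasDerivAt (fun t _ => hd t)
      (hc.intervalIntegrable R T)
    have h2 : φ R ≤ φ T + ‖∫ t in R..T, 2 * ⟪g (y + t • θ), D t⟫‖ := by
      have := neg_le_abs (∫ t in R..T, 2 * ⟪g (y + t • θ), D t⟫)
      rw [Real.norm_eq_abs]
      linarith
    calc ‖g (y + R • θ)‖ₑ ^ 2 = ENNReal.ofReal (φ R) := by
          rw [hφ, ENNReal.ofReal_pow (norm_nonneg _), ofReal_norm]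
      _ ≤ _ := ENNReal.ofReal_le_ofReal h2
      _ = ENNReal.ofReal (φ T) + ‖∫ t in R..T, 2 * ⟪g (y + t • θ), D t⟫‖ₑ := by
          rw [ENNReal.ofReal_add (by positivity) (by positivity), ofReal_norm]
      _ ≤ _ := by
          gcongr
          rw [intervalIntegral.integral_of_le hRT]
          refine (enorm_integral_le_lintegral_enorm _).trans ?_
          refine (lintegral_mono hb).trans ?_
          exact lintegral_mono_set Ioc_subset_Ioi_self
  have hlim : Tendsto (fun T => ENNReal.ofReal (φ T) + ∫⁻ t in Ioi R,
      (‖g (y + t • θ)‖ₑ ^ 2 + ‖fderiv ℝ g (y + t • θ)‖ₑ ^ 2)) atTop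
      (nhds (0 + ∫⁻ t in Ioi R,
      (‖g (y + t • θ)‖ₑ ^ 2 + ‖fderiv ℝ g (y + t • θ)‖ₑ ^ 2))) := by
    refine Tendsto.add ?_ tendsto_const_nhds
    rw [← ENNReal.ofReal_zero]
    apply ENNReal.tendsto_ofReal
    have h1 : Tendsto (fun T : ℝ => y + T • θ) atTop (cocompact (Euc n)) := by
      rw [← Metric.cobounded_eq_cocompact, ← tendsto_norm_atTop_iff_cobounded]
      refine tendsto_atTop_mono (f := fun T : ℝ => T - ‖y‖) ?_ (tendsto_atTop_add_const_right _ _ tendsto_id)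
      intro T
      have h2 : ‖T • θ‖ = |T| := by rw [norm_smul, hθ, mul_one, Real.norm_eq_abs]
      have h3 := norm_sub_le (y + T • θ) y
      rw [add_sub_cancel_left, h2] at h3
      have := le_abs_self T
      linarith
    have h2 := ((g.toZeroAtInfty.zero_at_infty').comp h1).norm.pow 2
    simpa using h2
  rw [zero_add] at hlim
  exact ge_of_tendsto hlim ((eventually_ge_atTop R).mono hT)

theorem trace_sq {n : ℕ} (hn : 2 ≤ n) (g : SchwartzMap (Euc n) ℂ) (y : Euc n) (R : ℝ)
    (hR : 0 < R) : ENNReal.ofReal (R ^ (n-1)) * ∫⁻ θ, ‖g (y + R • θ)‖ₑ ^ 2 ∂(sg n) ≤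
      ∫⁻ x, (‖g x‖ₑ ^ 2 + ‖fderiv ℝ g x‖ₑ ^ 2) := by
  have hDc : Continuous (fderiv ℝ g) := (g.smooth 1).continuous_fderiv (by norm_num)
  have hgc := g.continuous
  have hm : Measurable fun x : Euc n => (‖g (y + x)‖ₑ ^ 2 + ‖fderiv ℝ g (y + x)‖ₑ ^ 2) := by
    apply Continuous.measurable
    fun_prop
  rw [← lintegral_add_left_eq_self (μ := volume) _ y, polar (by omega) hm,
    ← lintegral_const_mul' _ _ ENNReal.ofReal_ne_top]
  apply lintegral_mono_ae
  filter_upwards [sg_ae] with θ hθ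
  refine (mul_le_mul_right (trace_pt g y θ hθ R) _).trans ?_
  rw [← lintegral_const_mul' _ _ ENNReal.ofReal_ne_top]
  calc _ ≤ ∫⁻ t in Ioi R, ENNReal.ofReal (t ^ (n-1)) * (‖g (y + t • θ)‖ₑ ^ 2 + ‖fderiv ℝ g (y + t • θ)‖ₑ ^ 2) := by
        refine setLIntegral_mono' measurableSet_Ioi ?_
        intro t ht
        have := (mem_Ioi.1 ht).le
        gcongr
    _ ≤ _ := lintegral_mono_set (Ioi_subset_Ioi hR.le)

open FourierTransform in
theorem ft_eq {n : ℕ} (f : Euc n → ℂ) (ξ : Euc n) : ft f ξ = 𝓕 f ((2 * Real.pi)⁻¹ • ξ) := by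
  rw [Real.fourier_eq', ft]
  congr 1
  ext x
  rw [smul_eq_mul, inner_smul_right, real_inner_comm]
  congr 2
  have : (Real.pi : ℂ) ≠ 0 := by exact_mod_cast Real.pi_ne_zero
  push_cast
  field_simp

def dilE (n : ℕ) : Euc n ≃L[ℝ] Euc n :=
  ContinuousLinearEquiv.smulLeft (Units.mk0 ((2 * Real.pi)⁻¹) (by positivity))

theorem dilE_apply {n : ℕ} (x : Euc n) : dilE n x = (2 * Real.pi)⁻¹ • x := rfl

theorem jap_tg {n : ℕ} (β : ℝ) : Function.HasTemperateGrowth (fun x : Euc n => jap x ^ β) := by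
  convert! Function.hasTemperateGrowth_one_add_norm_sq_rpow (Euc n) (β / 2) using 2 with x
  rw [jap, Real.sqrt_eq_rpow, ← Real.rpow_mul (by positivity)]
  congr 1
  ring

open FourierTransform in
def gS {n : ℕ} (β : ℝ) (q : SchwartzMap (Euc n) ℂ) : SchwartzMap (Euc n) ℂ :=
  SchwartzMap.smulLeftCLM ℂ (fun ξ : Euc n => jap ξ ^ β)
    (SchwartzMap.compCLMOfContinuousLinearEquiv ℂ (dilE n) (𝓕 q))

theorem gS_apply {n : ℕ} (β : ℝ) (q : SchwartzMap (Euc n) ℂ) (ξ : Euc n) :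
    gS β q ξ = ((jap ξ ^ β : ℝ) : ℂ) * ft q ξ := by
  rw [gS, SchwartzMap.smulLeftCLM_apply_apply (jap_tg β), ft_eq]
  simp [dilE_apply, SchwartzMap.fourier_coe]

open FourierTransform in
theorem besselD_eq {n : ℕ} (β : ℝ) (q : SchwartzMap (Euc n) ℂ) (x : Euc n) :
    besselD β q x = (((2 * Real.pi) ^ n : ℝ)⁻¹ : ℝ) • (𝓕⁻ (gS β q)) ((2 * Real.pi)⁻¹ • x) := by
  rw [besselD, SchwartzMap.fourierInv_coe, Real.fourierInv_eq']
  congr 2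
  ext ξ
  rw [smul_eq_mul, inner_smul_right, gS_apply]
  congr 2
  have : (Real.pi : ℂ) ≠ 0 := by exact_mod_cast Real.pi_ne_zero
  push_cast
  field_simp

open FourierTransform in
theorem planch {n : ℕ} (h : SchwartzMap (Euc n) ℂ) :
    ∫⁻ x, ‖(𝓕 h) x‖ₑ ^ 2 = ∫⁻ x, ‖h x‖ₑ ^ 2 := by
  have key : ∀ f : SchwartzMap (Euc n) ℂ, ∫⁻ x, ‖f x‖ₑ ^ 2 = ENNReal.ofReal (∫ x, ‖f x‖ ^ 2) := by
    intro f
    rw [ofReal_integral_eq_lintegral_ofReal]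
    · congr 1
      ext x
      rw [ENNReal.ofReal_pow (norm_nonneg _), ofReal_norm]
    · exact (f.memLp 2).integrable_norm_pow (by norm_num)
    · exact ae_of_all _ fun x => by positivity
  rw [key, key, SchwartzMap.integral_norm_sq_fourier]

theorem wSob_eq {n : ℕ} (β : ℝ) (q : SchwartzMap (Euc n) ℂ) :
    (wSobNorm β 1 q) ^ 2 = ∫⁻ x, ENNReal.ofReal (jap x ^ 2) * ‖besselD β q x‖ₑ ^ 2 := by
  rw [wSobNorm, eLpNorm_eq_lintegral_rpow_enorm_toReal (by norm_num) (by norm_num),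
    ← ENNReal.rpow_natCast, ← ENNReal.rpow_mul]
  norm_num
  congr 1
  ext x
  rw [mul_pow]
  congr 1
  have hj0 : 0 ≤ jap x := Real.sqrt_nonneg _
  rw [← ofReal_norm, Complex.norm_real, Real.norm_eq_abs, abs_of_nonneg hj0,
    ← ENNReal.ofReal_pow hj0]

theorem scale {n : ℕ} (c : ℝ) (hc : 0 < c) (F : Euc n → ℝ≥0∞) :
    ∫⁻ x, F (c⁻¹ • x) = ENNReal.ofReal (c ^ n) * ∫⁻ x, F x := by
  have h1 := Measure.map_addHaar_smul (volume : Measure (Euc n)) (inv_ne_zero hc.ne')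
  have h2 : MeasurableEmbedding (fun x : Euc n => c⁻¹ • x) :=
    (Homeomorph.smulOfNeZero c⁻¹ (inv_ne_zero hc.ne')).measurableEmbedding
  rw [← h2.lintegral_map, h1, lintegral_smul_measure]
  simp [abs_of_pos hc]

theorem opnorm_sq {n : ℕ} (L : Euc n →L[ℝ] ℂ) :
    ‖L‖ ^ 2 ≤ ∑ j, ‖L (EuclideanSpace.single j 1)‖ ^ 2 := by
  have h : ‖L‖ ≤ √(∑ j, ‖L (EuclideanSpace.single j 1)‖ ^ 2) := by
    refine L.opNorm_le_bound (Real.sqrt_nonneg _) ?_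
    intro v
    have h1 : v = ∑ j, v j • (EuclideanSpace.single j (1:ℝ) : Euc n) := by
      simpa using ((EuclideanSpace.basisFun (Fin n) ℝ).sum_repr v).symm
    have h2 : ‖L v‖ ≤ ∑ j, ‖L (EuclideanSpace.single j 1)‖ * ‖v j‖ := by
      conv_lhs => rw [h1, map_sum]
      refine (norm_sum_le _ _).trans (Finset.sum_le_sum fun j _ => ?_)
      rw [map_smul, norm_smul, mul_comm]
    refine h2.trans ?_
    rw [EuclideanSpace.norm_eq]
    exact Real.sum_mul_le_sqrt_mul_sqrt _ _ _
  calc _ ≤ (√(∑ j, ‖L (EuclideanSpace.single j 1)‖ ^ 2)) ^ 2 := by gcongr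
    _ = _ := Real.sq_sqrt (by positivity)

open FourierTransform LineDeriv in
theorem gS_bound {n : ℕ} (β : ℝ) (q : SchwartzMap (Euc n) ℂ) :
    ∫⁻ x, (‖gS β q x‖ₑ ^ 2 + ‖fderiv ℝ (gS β q) x‖ₑ ^ 2) ≤
      ENNReal.ofReal ((n + 1) * (2 * Real.pi) ^ n) * (wSobNorm β 1 q) ^ 2 := by
  set c : ℝ := 2 * Real.pi with hc
  have hcp : 0 < c := by positivity
  set h : SchwartzMap (Euc n) ℂ := 𝓕⁻ (gS β q) with hh
  have hg : gS β q = 𝓕 h := by rw [hh]; simp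
  have hw : ENNReal.ofReal (c ^ n) * (wSobNorm β 1 q) ^ 2 =
      ∫⁻ x, ENNReal.ofReal (1 + c^2 * ‖x‖^2) * ‖h x‖ₑ ^ 2 := by
    rw [wSob_eq]
    have e : ∀ x : Euc n, ENNReal.ofReal (jap x ^ 2) * ‖besselD β q x‖ₑ ^ 2 =
      (fun y => ENNReal.ofReal ((c^n)⁻¹ ^ 2) * (ENNReal.ofReal (1 + c^2 * ‖y‖^2) * ‖h y‖ₑ ^ 2)) (c⁻¹ • x) := by
      intro x
      rw [besselD_eq, jap, Real.sq_sqrt (by positivity), enorm_smul, mul_pow,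
        Real.enorm_eq_ofReal (by positivity), ← ENNReal.ofReal_pow (by positivity)]
      simp only []
      rw [← mul_assoc, ← mul_assoc, mul_comm (ENNReal.ofReal (1 + _))]
      congr 4
      rw [norm_smul, norm_inv, Real.norm_eq_abs, abs_of_pos hcp]
      field_simp
    rw [lintegral_congr e, scale c hcp (fun y => ENNReal.ofReal ((c^n)⁻¹ ^ 2) * (ENNReal.ofReal (1 + c^2 * ‖y‖^2) * ‖h y‖ₑ ^ 2)), lintegral_const_mul' _ _ ENNReal.ofReal_ne_top, ← mul_assoc, ← mul_assoc,
      ← ENNReal.ofReal_mul (by positivity), ← ENNReal.ofReal_mul (by positivity)]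
    have : c ^ n * c ^ n * (c ^ n)⁻¹ ^ 2 = 1 := by field_simp
    rw [this]
    simp
  have h0 : ∫⁻ x, ‖gS β q x‖ₑ ^ 2 ≤ ENNReal.ofReal (c ^ n) * (wSobNorm β 1 q) ^ 2 := by
    rw [hg, planch, hw]
    apply lintegral_mono
    intro x
    calc _ = 1 * ‖h x‖ₑ ^ 2 := by simp
      _ ≤ _ := by
        dsimp only
        gcongr
        rw [ENNReal.one_le_ofReal]
        have : 0 ≤ c^2 * ‖x‖^2 := by positivity
        linarith
  have hj : ∀ j : Fin n, ∫⁻ x, ‖fderiv ℝ (gS β q) x (EuclideanSpace.single j 1)‖ₑ ^ 2 ≤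
      ENNReal.ofReal (c ^ n) * (wSobNorm β 1 q) ^ 2 := by
    intro j
    set e : Euc n := EuclideanSpace.single j 1 with he
    have hen : ‖e‖ = 1 := by simp [he]
    have h1 : ∀ x, fderiv ℝ (gS β q) x e = (∂_{e} (gS β q)) x := fun x => rfl
    simp_rw [h1]
    rw [hg, SchwartzMap.lineDerivOp_fourier_eq, planch, hw]
    apply lintegral_mono
    intro x
    have htg : (inner ℝ · e : Euc n → ℝ).HasTemperateGrowth := ((innerSL ℝ).flip e).hasTemperateGrowth
    have h2 : (-(2 * Real.pi * Complex.I) • SchwartzMap.smulLeftCLM ℂ (inner ℝ · e : Euc n → ℝ) h) x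
        = -(2 * Real.pi * Complex.I) * ((⟪x, e⟫ : ℝ) • h x) := by
      rw [smul_apply, SchwartzMap.smulLeftCLM_apply_apply htg, smul_eq_mul]
    dsimp only
    rw [h2, ← ofReal_norm, ← ofReal_norm (h x), ← ENNReal.ofReal_pow (norm_nonneg _),
      ← ENNReal.ofReal_pow (norm_nonneg _), ← ENNReal.ofReal_mul (by positivity)]
    apply ENNReal.ofReal_le_ofReal
    have h3 : ‖-(2 * Real.pi * Complex.I : ℂ)‖ = c := by
      simp [hc, abs_of_pos Real.pi_pos]
    rw [norm_mul, h3, norm_smul, mul_pow, mul_pow ‖⟪x, e⟫‖, ← mul_assoc]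
    gcongr
    have h4 := norm_inner_le_norm (𝕜 := ℝ) x e
    rw [hen, mul_one] at h4
    have h5 : ‖⟪x, e⟫‖ ^ 2 ≤ ‖x‖ ^ 2 := by gcongr
    nlinarith [sq_nonneg c]
  have hDc : Continuous (fderiv ℝ (gS β q)) := ((gS β q).smooth 1).continuous_fderiv (by norm_num)
  have h1 : ∫⁻ x, ‖fderiv ℝ (gS β q) x‖ₑ ^ 2 ≤
      ∑ j : Fin n, ENNReal.ofReal (c ^ n) * (wSobNorm β 1 q) ^ 2 := by
    refine le_trans ?_ (Finset.sum_le_sum fun j _ => hj j)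
    rw [← lintegral_finsetSum]
    · apply lintegral_mono
      intro x
      have := ENNReal.ofReal_le_ofReal (opnorm_sq (fderiv ℝ (gS β q) x))
      rw [ENNReal.ofReal_sum_of_nonneg (fun _ _ => by positivity)] at this
      simpa only [ENNReal.ofReal_pow (norm_nonneg _), ofReal_norm] using this
    · intro j _
      apply Continuous.measurable
      fun_prop
  have hgc := (gS β q).continuous
  rw [lintegral_add_left (by apply Continuous.measurable; fun_prop)]
  refine (add_le_add h0 h1).trans (le_of_eq ?_)
  rw [ENNReal.ofReal_mul (by positivity), ENNReal.ofReal_add (by positivity) (by norm_num)]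
  simp
  ring

theorem cs_lint {X : Type*} [MeasurableSpace X] (μ : Measure X) (u v : X → ℝ≥0∞)
    (hu : AEMeasurable u μ) (hv : AEMeasurable v μ) :
    (∫⁻ x, u x * v x ∂μ) ^ 2 ≤ (∫⁻ x, u x ^ 2 ∂μ) * (∫⁻ x, v x ^ 2 ∂μ) := by
  have h := ENNReal.lintegral_mul_le_Lp_mul_Lq μ Real.HolderConjugate.two_two hu hv
  calc _ ≤ ((∫⁻ x, u x ^ (2:ℝ) ∂μ) ^ (1/(2:ℝ)) * (∫⁻ x, v x ^ (2:ℝ) ∂μ) ^ (1/(2:ℝ))) ^ 2 := by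
        gcongr
        exact h
    _ = _ := by
        rw [mul_pow, ← ENNReal.rpow_natCast, ← ENNReal.rpow_natCast, ← ENNReal.rpow_mul,
          ← ENNReal.rpow_mul]
        norm_num

theorem geo1 {n : ℕ} (r : ℝ) (hr : 0 < r) (η θ : Euc n) (hθ : ‖θ‖ = 1) (hA : ⟪η, θ⟫ ≤ 0) :
    ‖η‖ * (1 + r) / 4 ≤ ‖(2⁻¹:ℝ) • (η - (r * ‖η‖) • θ)‖ := by
  have h1 : ‖η - (r * ‖η‖) • θ‖ ^ 2 = ‖η‖^2 - 2 * (r * ‖η‖) * ⟪η, θ⟫ + (r * ‖η‖)^2 := by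
    rw [norm_sub_sq_real, inner_smul_right, norm_smul, hθ, mul_one, Real.norm_eq_abs, sq_abs]
    ring
  have h2 : ‖η‖ * (1 + r) / 2 ≤ ‖η - (r * ‖η‖) • θ‖ := by
    apply le_of_sq_le_sq _ (norm_nonneg _)
    rw [h1]
    have : 0 ≤ (r * ‖η‖) * (-⟪η, θ⟫) := mul_nonneg (by positivity) (neg_nonneg.2 hA)
    nlinarith [sq_nonneg (‖η‖ * (1 - r)), sq_nonneg (‖η‖ * (1+r))]
  rw [norm_smul]
  norm_num
  linarith

theorem geo2 {n : ℕ} (r : ℝ) (hr : 0 < r) (ω θ : Euc n) (hω : ‖ω‖ = 1) (hθ : ‖θ‖ = 1) :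
    r * ‖ω + θ‖ ≤ 2 * ‖ω + r • θ‖ := by
  have h1 : ‖ω + r • θ‖ ^ 2 = (1 - r)^2 + r * ‖ω + θ‖^2 := by
    rw [norm_add_sq_real, norm_add_sq_real, inner_smul_right, norm_smul, hω, hθ, mul_one,
      Real.norm_eq_abs, sq_abs]
    ring
  have h2 : ‖ω + θ‖ ≤ 2 := (norm_add_le _ _).trans (by rw [hω, hθ]; norm_num)
  apply le_of_sq_le_sq _ (by positivity)
  rw [mul_pow, mul_pow, h1]
  set s := ‖ω + θ‖
  have h3 : s^2 ≤ 4 := by nlinarith [norm_nonneg (ω + θ)]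
  rcases le_total r 4 with h | h
  · nlinarith [mul_nonneg (mul_nonneg hr.le (sub_nonneg.2 h)) (sq_nonneg s), sq_nonneg (1 - r)]
  · nlinarith [mul_nonneg (mul_nonneg hr.le (sub_nonneg.2 h)) (sub_nonneg.2 h3)]

theorem geo3 {n : ℕ} (r : ℝ) (hr : 0 < r) (ω θ : Euc n) (hω : ‖ω‖ = 1) (hθ : ‖θ‖ = 1)
    (hA : ⟪ω, θ⟫ ≤ 0) :
    ‖‖ω - r • θ‖⁻¹ • (ω - r • θ) + θ‖ ≤ ‖ω + θ‖ := by
  set m := ‖ω - r • θ‖ with hm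
  have h1 : m ^ 2 = 1 - 2 * r * ⟪ω, θ⟫ + r ^ 2 := by
    rw [hm, norm_sub_sq_real, inner_smul_right, norm_smul, hω, hθ, mul_one, Real.norm_eq_abs, sq_abs]
    ring
  have hm0 : 0 < m := by
    have : 0 ≤ m := norm_nonneg _
    rcases this.eq_or_lt with h | h
    · rw [← h] at h1
      nlinarith
    · exact h
  have h2 : m ≤ 1 + r := by
    refine (norm_sub_le _ _).trans ?_
    rw [hω, norm_smul, hθ, Real.norm_eq_abs, abs_of_pos hr]
    linarith
  have h3 : ‖m⁻¹ • (ω - r • θ)‖ = 1 := by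
    rw [norm_smul, ← hm, norm_inv, Real.norm_eq_abs, abs_of_pos hm0, inv_mul_cancel₀ hm0.ne']
  have hc : -1 ≤ ⟪ω, θ⟫ := by
    have := abs_real_inner_le_norm ω θ
    rw [hω, hθ] at this
    linarith [neg_abs_le ⟪ω, θ⟫]
  apply le_of_sq_le_sq _ (norm_nonneg _)
  rw [norm_add_sq_real, norm_add_sq_real, h3, hω, inner_smul_left, inner_sub_left, inner_smul_left,
    real_inner_self_eq_norm_sq, hθ]
  simp only [conj_trivial]
  have : m⁻¹ * (⟪ω, θ⟫ - r * 1 ^ 2) ≤ ⟪ω, θ⟫ := by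
    rw [inv_mul_le_iff₀ hm0]
    nlinarith
  linarith

theorem geo4 {n : ℕ} (r : ℝ) (hr : 0 < r) (η θ : Euc n) (hη : η ≠ 0) (hθ : ‖θ‖ = 1)
    (hA : ⟪η, θ⟫ ≤ 0) (x : Euc n) (hx : x = (2⁻¹:ℝ) • (η - (r * ‖η‖) • θ)) :
    r * ‖η‖ / 4 * ‖‖x‖⁻¹ • x + θ‖ ≤ ‖(2⁻¹:ℝ) • η + (r * ‖η‖ / 2) • θ‖ := by
  have hp : 0 < ‖η‖ := norm_pos_iff.2 hη
  set ω := ‖η‖⁻¹ • η with hω'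
  have hω : ‖ω‖ = 1 := by
    rw [hω', norm_smul, norm_inv, norm_norm, inv_mul_cancel₀ hp.ne']
  have he : η = ‖η‖ • ω := by rw [hω', smul_smul, mul_inv_cancel₀ hp.ne', one_smul]
  have hA' : ⟪ω, θ⟫ ≤ 0 := by
    rw [hω', inner_smul_left]
    exact mul_nonpos_of_nonneg_of_nonpos (by simp) hA
  have hx' : x = (2⁻¹ * ‖η‖) • (ω - r • θ) := by
    rw [hx]
    nth_rw 1 [he]
    module
  have hv : ‖x‖⁻¹ • x = ‖ω - r • θ‖⁻¹ • (ω - r • θ) := by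
    rw [hx', norm_smul, Real.norm_eq_abs, abs_of_pos (by positivity), smul_smul]
    congr 1
    field_simp
  have hy : (2⁻¹:ℝ) • η + (r * ‖η‖ / 2) • θ = (2⁻¹ * ‖η‖) • (ω + r • θ) := by
    nth_rw 1 [he]
    module
  rw [hv, hy, norm_smul, Real.norm_eq_abs, abs_of_pos (by positivity)]
  have h3 := geo3 r hr ω θ hω hθ hA'
  have h2 := geo2 r hr ω θ hω hθ
  have h4 := mul_le_mul_of_nonneg_left h3 hr.le
  nlinarith [h4.trans h2]

theorem real_bd (n : ℕ) (hn : 2 ≤ n) (α β β' γ : ℝ) (hβ : 0 ≤ β) (hβ' : 0 ≤ β')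
    (h2 : 2 * β' < (n:ℝ) - 1) (hγ : 2 * γ = 3 + 2 * β + 2 * β' - n) (hαγ : α ≤ γ)
    (r : ℝ) (hr : 0 < r) (η : Euc n) (hη : 1 ≤ ‖η‖) :
    (jap η ^ α) ^ 2 * (2 / (‖η‖ * (1 + r))) ^ 2 * ((r * ‖η‖ / 2) ^ (n - 1) *
      ((‖η‖ * (1 + r) / 4) ^ (-β) * (r * ‖η‖ / 4) ^ (-β')) ^ 2) ≤
    (4 ^ |α| * 4 ^ (2 * β' + 2 * β + 1)) * (1 + r) ^ (-(2 * γ)) := by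
  set t := ‖η‖ with ht
  have htp : 0 < t := by linarith
  have h1r : 0 < 1 + r := by linarith
  have hκ : 0 < t * (1 + r) := by positivity
  have hj0 : 0 < jap η := Real.sqrt_pos.2 (by positivity)
  have hj1 : t ≤ jap η := by
    apply Real.le_sqrt_of_sq_le
    linarith
  have hj2 : jap η ≤ 2 * t := by
    apply Real.sqrt_le_iff.2
    constructor
    · positivity
    · rw [← ht]; nlinarith
  have a1 : (jap η ^ α) ^ 2 ≤ 4 ^ |α| * t ^ (2 * α) := by
    rw [← Real.rpow_mul_natCast hj0.le]
    rcases le_total 0 α with h | h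
    · calc jap η ^ (α * (2:ℕ)) ≤ (2 * t) ^ (α * (2:ℕ)) :=
            Real.rpow_le_rpow hj0.le hj2 (by positivity)
        _ = _ := by
            rw [Real.mul_rpow (by norm_num) htp.le, abs_of_nonneg h, mul_comm α,
              Real.rpow_mul (by norm_num)]
            norm_num
    · calc jap η ^ (α * (2:ℕ)) ≤ t ^ (α * (2:ℕ)) :=
            Real.rpow_le_rpow_of_nonpos htp hj1 (by push_cast; linarith)
        _ = 1 * t ^ (2 * α) := by push_cast; ring_nf
        _ ≤ _ := by
            gcongr
            exact Real.one_le_rpow (by norm_num) (abs_nonneg _)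
  have a2 : (2 / (t * (1 + r))) ^ 2 = 4 * (t * (1 + r)) ^ (-2 : ℝ) := by
    rw [Real.rpow_neg hκ.le, div_pow]
    norm_num
    ring
  have a3 : (r * t / 2) ^ (n - 1) *
      ((t * (1 + r) / 4) ^ (-β) * (r * t / 4) ^ (-β')) ^ 2 ≤
      4 ^ (2 * β' + 2 * β) * (t * (1 + r)) ^ (-(2 * β) + ((n:ℝ) - 1 - 2 * β')) := by
    have b1 : ((t * (1 + r) / 4) ^ (-β)) ^ 2 = (t * (1 + r)) ^ (-(2*β)) * 4 ^ (2 * β) := by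
      rw [← Real.rpow_mul_natCast (by positivity), Real.div_rpow hκ.le (by norm_num)]
      rw [show -β * ((2:ℕ):ℝ) = -(2*β) by push_cast; ring, Real.rpow_neg (show (0:ℝ) ≤ 4 by norm_num) (2 * β)]
      field_simp
    have b2 : ((r * t / 4) ^ (-β')) ^ 2 = (r * t) ^ (-(2*β')) * 4 ^ (2 * β') := by
      rw [← Real.rpow_mul_natCast (by positivity), Real.div_rpow (by positivity) (by norm_num)]
      rw [show -β' * ((2:ℕ):ℝ) = -(2*β') by push_cast; ring, Real.rpow_neg (show (0:ℝ) ≤ 4 by norm_num) (2 * β')]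
      field_simp
    have b3 : (r * t / 2) ^ (n - 1) ≤ (r * t) ^ ((n:ℝ) - 1) := by
      have : ((n:ℝ) - 1) = ((n - 1 : ℕ) : ℝ) := by push_cast [show 1 ≤ n by omega]; ring
      rw [this, Real.rpow_natCast]
      gcongr
      have : 0 ≤ r * t := by positivity
      linarith
    have b4 : (r * t) ^ ((n:ℝ) - 1) * (r * t) ^ (-(2*β')) ≤ (t * (1 + r)) ^ ((n:ℝ) - 1 - 2 * β') := by
      rw [← Real.rpow_add (by positivity)]
      rw [← sub_eq_add_neg]
      apply Real.rpow_le_rpow (by positivity) _ (by linarith)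
      nlinarith
    rw [mul_pow, b1, b2, Real.rpow_add (by norm_num), Real.rpow_add hκ]
    calc _ ≤ (r * t) ^ ((n:ℝ) - 1) * ((t * (1 + r)) ^ (-(2*β)) * 4 ^ (2 * β) * ((r * t) ^ (-(2*β')) * 4 ^ (2 * β'))) := by
          gcongr
      _ = ((r * t) ^ ((n:ℝ) - 1) * (r * t) ^ (-(2*β'))) * ((t * (1 + r)) ^ (-(2*β)) * 4 ^ (2 * β) * 4 ^ (2 * β')) := by ring
      _ ≤ (t * (1 + r)) ^ ((n:ℝ) - 1 - 2 * β') * ((t * (1 + r)) ^ (-(2*β)) * 4 ^ (2 * β) * 4 ^ (2 * β')) := by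
          gcongr
      _ = _ := by ring
  calc _ ≤ (4 ^ |α| * t ^ (2 * α)) * (4 * (t * (1 + r)) ^ (-2 : ℝ)) *
        (4 ^ (2 * β' + 2 * β) * (t * (1 + r)) ^ (-(2 * β) + ((n:ℝ) - 1 - 2 * β'))) := by
        rw [a2]
        gcongr
    _ = (4 ^ |α| * (4 ^ (2 * β' + 2 * β) * 4)) * (t ^ (2 * α) * ((t * (1 + r)) ^ (-2 : ℝ) *
          (t * (1 + r)) ^ (-(2 * β) + ((n:ℝ) - 1 - 2 * β')))) := by ring
    _ = (4 ^ |α| * 4 ^ (2 * β' + 2 * β + 1)) * (t ^ (2 * α - 2 * γ) * (1 + r) ^ (-(2 * γ))) := by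
        rw [← Real.rpow_add hκ, Real.rpow_add (by norm_num : (0:ℝ) < 4) _ 1, Real.rpow_one,
          show -2 + (-(2 * β) + ((n:ℝ) - 1 - 2 * β')) = -(2 * γ) by rw [hγ]; ring,
          Real.mul_rpow htp.le h1r.le, ← mul_assoc (t ^ _), ← Real.rpow_add htp, ← sub_eq_add_neg]
    _ ≤ (4 ^ |α| * 4 ^ (2 * β' + 2 * β + 1)) * (1 * (1 + r) ^ (-(2 * γ))) := by
        gcongr
        exact Real.rpow_le_one_of_one_le_of_nonpos hη (by linarith)
    _ = _ := by ring

theorem ft_cont {n : ℕ} (q : SchwartzMap (Euc n) ℂ) : Continuous (ft q) := by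
  have : ft q = gS 0 q := by
    ext ξ
    simp [gS_apply]
  rw [this]
  exact (gS 0 q).continuous

def WW {n : ℕ} (x θ : Euc n) : ℝ≥0∞ := ‖‖x‖⁻¹ • x + θ‖ₑ

def GG {n : ℕ} (g : Euc n → ℂ) (β' : ℝ) (x θ : Euc n) : ℝ≥0∞ :=
  ‖g x‖ₑ ^ 2 * WW x θ ^ (-(2 * β'))

theorem GG_meas {n : ℕ} (g : Euc n → ℂ) (hg : Continuous g) (β' : ℝ) :
    Measurable (fun p : Euc n × Euc n => GG g β' p.1 p.2) := by
  unfold GG WW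
  have := hg.measurable
  fun_prop

theorem one_le_jap {n : ℕ} (x : Euc n) : 1 ≤ jap x := by
  apply Real.le_sqrt_of_sq_le
  nlinarith [sq_nonneg ‖x‖]

theorem norm_le_jap {n : ℕ} (x : Euc n) : ‖x‖ ≤ jap x := by
  apply Real.le_sqrt_of_sq_le
  linarith

theorem ft_enorm {n : ℕ} (β : ℝ) (q : SchwartzMap (Euc n) ℂ) (ξ : Euc n) :
    ‖ft q ξ‖ₑ = ENNReal.ofReal (jap ξ ^ (-β)) * ‖gS β q ξ‖ₑ := by
  have hj : 0 < jap ξ := lt_of_lt_of_le one_pos (one_le_jap ξ)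
  rw [gS_apply, enorm_mul, ← ofReal_norm (((jap ξ ^ β : ℝ) : ℂ)), Complex.norm_real,
    Real.norm_of_nonneg (by positivity), ← mul_assoc, ← ENNReal.ofReal_mul (by positivity),
    ← Real.rpow_add hj]
  simp

theorem pt_bd {n : ℕ} (β β' : ℝ) (hβ' : 0 ≤ β') (hββ : β' ≤ β)
    (q : SchwartzMap (Euc n) ℂ) (r : ℝ) (hr : 0 < r) (η θ : Euc n) (hη : η ≠ 0) (hθ : ‖θ‖ = 1)
    (hA : ⟪η, θ⟫ ≤ 0) :
    ‖ft q ((2⁻¹:ℝ) • η + (r * ‖η‖ / 2) • θ)‖ₑ * ‖ft q ((2⁻¹:ℝ) • η + (r * ‖η‖ / 2) • (-θ))‖ₑ ≤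
      ENNReal.ofReal ((‖η‖ * (1 + r) / 4) ^ (-β) * (r * ‖η‖ / 4) ^ (-β')) *
      ((‖gS β q ((2⁻¹:ℝ) • (η - (r * ‖η‖) • θ))‖ₑ *
          WW ((2⁻¹:ℝ) • (η - (r * ‖η‖) • θ)) θ ^ (-β')) *
        ‖gS β q ((2⁻¹:ℝ) • η + (r * ‖η‖ / 2) • θ)‖ₑ) := by
  have hp : 0 < ‖η‖ := norm_pos_iff.2 hη
  have e : (2⁻¹:ℝ) • η + (r * ‖η‖ / 2) • (-θ) = (2⁻¹:ℝ) • (η - (r * ‖η‖) • θ) := by module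
  have g1 := geo1 r hr η θ hθ hA
  have g4 := geo4 r hr η θ hη hθ hA _ rfl
  rw [e]
  set x := (2⁻¹:ℝ) • (η - (r * ‖η‖) • θ)
  set ξ := (2⁻¹:ℝ) • η + (r * ‖η‖ / 2) • θ
  rw [ft_enorm β, ft_enorm β q x]
  have b1 : ENNReal.ofReal (jap x ^ (-β)) ≤ ENNReal.ofReal ((‖η‖ * (1 + r) / 4) ^ (-β)) := by
    apply ENNReal.ofReal_le_ofReal
    exact Real.rpow_le_rpow_of_nonpos (by positivity) (g1.trans (norm_le_jap x)) (by linarith)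
  have b2 : ENNReal.ofReal (jap ξ ^ (-β)) ≤ ENNReal.ofReal ((r * ‖η‖ / 4) ^ (-β')) *
      WW x θ ^ (-β') := by
    have hj : 0 < jap ξ := lt_of_lt_of_le one_pos (one_le_jap ξ)
    calc _ ≤ ENNReal.ofReal (jap ξ ^ (-β')) := by
          apply ENNReal.ofReal_le_ofReal
          exact Real.rpow_le_rpow_of_exponent_le (one_le_jap ξ) (by linarith)
      _ = ENNReal.ofReal (jap ξ) ^ (-β') := (ENNReal.ofReal_rpow_of_pos hj).symm
      _ ≤ (ENNReal.ofReal (r * ‖η‖ / 4) * WW x θ) ^ (-β') := by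
          rw [ENNReal.rpow_neg, ENNReal.rpow_neg]
          gcongr
          rw [WW, ← ofReal_norm, ← ENNReal.ofReal_mul (by positivity)]
          exact ENNReal.ofReal_le_ofReal (g4.trans (norm_le_jap ξ))
      _ = _ := by
          rw [ENNReal.mul_rpow_of_ne_top ENNReal.ofReal_ne_top (by simp [WW]),
            ENNReal.ofReal_rpow_of_pos (by positivity)]
  calc _ ≤ (ENNReal.ofReal ((r * ‖η‖ / 4) ^ (-β')) * WW x θ ^ (-β') * ‖gS β q ξ‖ₑ) *
        (ENNReal.ofReal ((‖η‖ * (1 + r) / 4) ^ (-β)) * ‖gS β q x‖ₑ) := by gcongr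
    _ = _ := by
        rw [ENNReal.ofReal_mul (by positivity)]
        ring

theorem fold {n : ℕ} (η : Euc n) (a : Euc n → ℝ≥0∞) (ha : ∀ θ, a (-θ) = a θ) (ham : Measurable a) :
    ∫⁻ θ, a θ ∂(sg n) ≤ 2 * ∫⁻ θ in {θ | ⟪η, θ⟫ ≤ 0}, a θ ∂(sg n) := by
  have hs : MeasurableSet {θ : Euc n | ⟪η, θ⟫ ≤ 0} :=
    (isClosed_le (f := fun θ : Euc n => ⟪η, θ⟫) (g := fun _ => (0:ℝ)) (by fun_prop)
      (by fun_prop)).measurableSet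
  have h1 : ∫⁻ θ in {θ : Euc n | ⟪η, θ⟫ ≤ 0}ᶜ, a θ ∂(sg n) ≤
      ∫⁻ θ in {θ | ⟪η, θ⟫ ≤ 0}, a θ ∂(sg n) := by
    conv_rhs => rw [← sg_map (LinearIsometryEquiv.neg ℝ)]
    rw [setLIntegral_map hs ham (LinearIsometryEquiv.continuous _).measurable]
    have : ∀ θ : Euc n, a ((LinearIsometryEquiv.neg ℝ) θ) = a θ := fun θ => ha θ
    simp_rw [this]
    apply lintegral_mono_set
    intro θ hθ
    simp at hθ ⊢
    exact hθ.le
  rw [← lintegral_add_compl a hs, two_mul]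
  gcongr

theorem I_bd {n : ℕ} (hn : 2 ≤ n) : ∃ C : ℝ≥0∞, C ≠ ⊤ ∧ ∀ (β β' : ℝ) (_ : 0 ≤ β') (_ : β' ≤ β)
    (q : SchwartzMap (Euc n) ℂ) (r : ℝ) (_ : 0 < r) (η : Euc n) (_ : η ≠ 0),
    ‖∫ ξ, ft q ξ * ft q (η - ξ) ∂(ewaldM n r η)‖ₑ ^ 2 ≤
      C * (∫⁻ x, (‖gS β q x‖ₑ ^ 2 + ‖fderiv ℝ (gS β q) x‖ₑ ^ 2)) *
      ENNReal.ofReal ((r * ‖η‖ / 2) ^ (n - 1) *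
        ((‖η‖ * (1 + r) / 4) ^ (-β) * (r * ‖η‖ / 4) ^ (-β')) ^ 2) *
      ∫⁻ θ in {θ | ⟪η, θ⟫ ≤ 0}, GG (gS β q) β' ((2⁻¹:ℝ) • (η - (r * ‖η‖) • θ)) θ ∂(sg n) := by
  obtain ⟨C1, hC1, hsl⟩ := sphere_lint hn
  refine ⟨4 * C1 ^ 2, by finiteness, ?_⟩
  intro β β' hβ' hββ q r hr η hη
  have hp : 0 < ‖η‖ := norm_pos_iff.2 hη
  have hfc := ft_cont q
  have hgc := (gS β q).continuous
  have hs : MeasurableSet {θ : Euc n | ⟪η, θ⟫ ≤ 0} :=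
    (isClosed_le (f := fun θ : Euc n => ⟪η, θ⟫) (g := fun _ => (0:ℝ)) (by fun_prop)
      (by fun_prop)).measurableSet
  set R := r * ‖η‖ / 2 with hR
  have hRp : 0 < R := by positivity
  set k := (‖η‖ * (1 + r) / 4) ^ (-β) * (r * ‖η‖ / 4) ^ (-β') with hk
  have hk0 : 0 ≤ k := by positivity
  set u : Euc n → ℝ≥0∞ := fun θ => ‖gS β q ((2⁻¹:ℝ) • (η - (r * ‖η‖) • θ))‖ₑ *
          WW ((2⁻¹:ℝ) • (η - (r * ‖η‖) • θ)) θ ^ (-β') with hu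
  set v : Euc n → ℝ≥0∞ := fun θ => ‖gS β q ((2⁻¹:ℝ) • η + R • θ)‖ₑ with hv
  have hum : Measurable u := by
    simp only [hu, WW]
    have := hgc.measurable
    fun_prop
  have hvm : Measurable v := by
    simp only [hv]
    have := hgc.measurable
    fun_prop
  set a : Euc n → ℝ≥0∞ := fun θ => ‖ft q ((2⁻¹:ℝ) • η + R • θ)‖ₑ * ‖ft q ((2⁻¹:ℝ) • η + R • (-θ))‖ₑ with ha
  have ham : Measurable a := by
    simp only [ha]
    have := hfc.measurable
    fun_prop
  set P := ENNReal.ofReal (R ^ (n-1)) with hP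
  have s1 : ‖∫ ξ, ft q ξ * ft q (η - ξ) ∂(ewaldM n r η)‖ₑ ≤ C1 * P * ∫⁻ θ, a θ ∂(sg n) := by
    refine (enorm_integral_le_lintegral_enorm _).trans ?_
    refine (hsl ((2⁻¹:ℝ) • η) R hRp (fun ξ => ‖ft q ξ * ft q (η - ξ)‖ₑ)
      (by apply Continuous.measurable; fun_prop)).trans (le_of_eq ?_)
    congr 2
    ext θ
    rw [enorm_mul, ha]
    congr 3
    module
  have s2 : ∫⁻ θ, a θ ∂(sg n) ≤ 2 * ∫⁻ θ in {θ | ⟪η, θ⟫ ≤ 0}, a θ ∂(sg n) := by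
    apply fold η a _ ham
    intro θ
    simp only [ha, neg_neg]
    rw [mul_comm]
  have s3 : ∫⁻ θ in {θ | ⟪η, θ⟫ ≤ 0}, a θ ∂(sg n) ≤
      ENNReal.ofReal k * ∫⁻ θ in {θ | ⟪η, θ⟫ ≤ 0}, u θ * v θ ∂(sg n) := by
    rw [← lintegral_const_mul' _ _ ENNReal.ofReal_ne_top]
    apply lintegral_mono_ae
    filter_upwards [ae_restrict_mem hs, ae_restrict_of_ae sg_ae] with θ h1 h2
    exact pt_bd β β' hβ' hββ q r hr η θ hη h2 h1
  set X := ∫⁻ θ in {θ | ⟪η, θ⟫ ≤ 0}, u θ * v θ ∂(sg n) with hX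
  set V := ∫⁻ θ, v θ ^ 2 ∂(sg n) with hV
  have s4 : X ^ 2 ≤ (∫⁻ θ in {θ | ⟪η, θ⟫ ≤ 0}, GG (gS β q) β' ((2⁻¹:ℝ) • (η - (r * ‖η‖) • θ)) θ ∂(sg n)) * V := by
    refine (cs_lint _ u v hum.aemeasurable hvm.aemeasurable).trans ?_
    gcongr
    · apply le_of_eq
      simp only [hu, GG, mul_pow]
      rw [← ENNReal.rpow_mul_natCast]
      congr 2
      push_cast
      ring
    · exact setLIntegral_le_lintegral _ _
  have s5 : P * V ≤ ∫⁻ x, (‖gS β q x‖ₑ ^ 2 + ‖fderiv ℝ (gS β q) x‖ₑ ^ 2) :=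
    trace_sq hn (gS β q) ((2⁻¹:ℝ) • η) R hRp
  set J := ∫⁻ θ in {θ | ⟪η, θ⟫ ≤ 0}, GG (gS β q) β' ((2⁻¹:ℝ) • (η - (r * ‖η‖) • θ)) θ ∂(sg n)
  set N := ∫⁻ x, (‖gS β q x‖ₑ ^ 2 + ‖fderiv ℝ (gS β q) x‖ₑ ^ 2)
  rw [ENNReal.ofReal_mul (by positivity), ENNReal.ofReal_pow hk0, ← hP]
  calc _ ≤ (C1 * P * (2 * (ENNReal.ofReal k * X))) ^ 2 := by
        gcongr
        exact s1.trans (by gcongr; exact s2.trans (by gcongr))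
    _ = 4 * C1 ^ 2 * (ENNReal.ofReal k ^ 2) * P * P * X ^ 2 := by ring
    _ ≤ 4 * C1 ^ 2 * (ENNReal.ofReal k ^ 2) * P * P * (J * V) := by gcongr
    _ = 4 * C1 ^ 2 * (ENNReal.ofReal k ^ 2) * P * J * (P * V) := by ring
    _ ≤ 4 * C1 ^ 2 * (ENNReal.ofReal k ^ 2) * P * J * N := by gcongr
    _ = _ := by ring

theorem J_bd {n : ℕ} (hn : 2 ≤ n) (β' : ℝ) (hβ' : 0 ≤ β') (h2 : 2 * β' < (n:ℝ) - 1) :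
    ∃ C : ℝ≥0∞, C ≠ ⊤ ∧ ∀ (g : Euc n → ℂ) (_ : Continuous g) (r : ℝ) (_ : 0 < r),
      ∫⁻ η in {0}ᶜ, ∫⁻ θ in {θ | ⟪η, θ⟫ ≤ 0}, GG g β' ((2⁻¹:ℝ) • (η - (r * ‖η‖) • θ)) θ ∂(sg n) ≤
      C * ∫⁻ x, ‖g x‖ₑ ^ 2 := by
  obtain ⟨C3, hC3, hss⟩ := sg_sing hn (s := 2 * β') (by positivity) h2
  refine ⟨2 ^ n * C3, by finiteness, ?_⟩
  intro g hg r hr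
  have hGm := GG_meas g hg β'
  have hs : MeasurableSet {p : Euc n × Euc n | ⟪p.1, p.2⟫ ≤ 0} :=
    (isClosed_le (f := fun p : Euc n × Euc n => ⟪p.1, p.2⟫) (g := fun _ => (0:ℝ)) (by fun_prop)
      (by fun_prop)).measurableSet
  have hs1 : ∀ η : Euc n, MeasurableSet {θ : Euc n | ⟪η, θ⟫ ≤ 0} := fun η =>
    (isClosed_le (f := fun θ : Euc n => ⟪η, θ⟫) (g := fun _ => (0:ℝ)) (by fun_prop)
      (by fun_prop)).measurableSet
  have hs2 : ∀ θ : Euc n, MeasurableSet {η : Euc n | ⟪η, θ⟫ ≤ 0} := fun θ =>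
    (isClosed_le (f := fun η : Euc n => ⟪η, θ⟫) (g := fun _ => (0:ℝ)) (by fun_prop)
      (by fun_prop)).measurableSet
  have hm0 : MeasurableSet ({0}ᶜ : Set (Euc n)) := (measurableSet_singleton 0).compl
  set Φ : Euc n → Euc n → ℝ≥0∞ := fun η θ => {p : Euc n × Euc n | ⟪p.1, p.2⟫ ≤ 0}.indicator
    (fun p => GG g β' ((2⁻¹:ℝ) • (p.1 - (r * ‖p.1‖) • p.2)) p.2) (η, θ) with hΦ
  have hΦm : Measurable (Function.uncurry Φ) := by
    refine Measurable.indicator (f := fun p : Euc n × Euc n => GG g β' ((2⁻¹:ℝ) • (p.1 - (r * ‖p.1‖) • p.2)) p.2) ?_ hs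
    exact hGm.comp (f := fun p : Euc n × Euc n => ((2⁻¹:ℝ) • (p.1 - (r * ‖p.1‖) • p.2), p.2)) (by fun_prop)
  calc _ = ∫⁻ η in {0}ᶜ, ∫⁻ θ, Φ η θ ∂(sg n) := by
        congr 1
        ext η
        rw [← lintegral_indicator (hs1 η)]
        rfl
    _ = ∫⁻ θ, ∫⁻ η in {0}ᶜ, Φ η θ ∂volume ∂(sg n) := lintegral_lintegral_swap hΦm.aemeasurable
    _ ≤ ∫⁻ θ, 2 ^ n * ∫⁻ x, GG g β' x θ ∂volume ∂(sg n) := by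
        apply lintegral_mono_ae
        filter_upwards [sg_ae] with θ hθ
        refine le_trans (le_of_eq ?_) (jac r hr θ hθ (fun x => GG g β' x θ))
        have e : {η : Euc n | η ≠ 0 ∧ ⟪η, θ⟫ ≤ 0} = {η : Euc n | ⟪η, θ⟫ ≤ 0} ∩ {0}ᶜ := by
          ext η; simp [and_comm]
        rw [e, ← Measure.restrict_restrict (hs2 θ), ← lintegral_indicator (hs2 θ)]
        rfl
    _ = 2 ^ n * ∫⁻ x, ∫⁻ θ, GG g β' x θ ∂(sg n) := by
        rw [lintegral_const_mul' _ _ (by finiteness)]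
        congr 1
        exact (lintegral_lintegral_swap (f := fun x θ => GG g β' x θ) hGm.aemeasurable).symm
    _ ≤ 2 ^ n * ∫⁻ x, C3 * ‖g x‖ₑ ^ 2 := by
        have hnt : Nontrivial (Euc n) := by
          have : Nonempty (Fin n) := ⟨⟨0, by omega⟩⟩
          infer_instance
        gcongr 1
        apply lintegral_mono_ae
        have h0 : ∀ᵐ x : Euc n, x ≠ 0 := by simp [ae_iff]
        filter_upwards [h0] with x hx
        have hx' : ‖-(‖x‖⁻¹ • x)‖ = 1 := by
          rw [norm_neg, norm_smul, norm_inv, norm_norm, inv_mul_cancel₀ (norm_ne_zero_iff.2 hx)]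
        have h3 := hss _ hx'
        simp only [GG]
        rw [lintegral_const_mul' _ _ (by finiteness), mul_comm]
        gcongr
        refine le_trans (le_of_eq ?_) h3
        congr 1
        ext θ
        rw [WW, sub_neg_eq_add, add_comm]
    _ = _ := by rw [lintegral_const_mul' _ _ hC3, mul_assoc]

/-- weighted `L²` estimate for the spherical part `χ·S_r(q)` of the double
dispersion operator. -/
theorem stmt4 (n : ℕ) (hn : 2 ≤ n) (β α : ℝ) (hβ : 0 ≤ β)
    (hrange : (((n : ℝ) - 3) / 2 < β ∧ β < ((n : ℝ) - 1) / 2 ∧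
        α ≤ 2 * β - ((n : ℝ) - 3) / 2) ∨
      (((n : ℝ) - 1) / 2 ≤ β ∧ α < β + 1))
    (C₀ : ℝ) (hC₀ : 1 ≤ C₀) (χ : Euc n → ℝ) (hχsm : ContDiff ℝ (⊤ : ℕ∞) χ)
    (hχ01 : ∀ ξ, χ ξ ∈ Set.Icc (0 : ℝ) 1)
    (hχ1 : ∀ ξ : Euc n, 2 * C₀ < ‖ξ‖ → χ ξ = 1)
    (hχ0 : ∀ ξ : Euc n, ‖ξ‖ < C₀ → χ ξ = 0) :
    ∃ γ C : ℝ, 0 < γ ∧ 0 < C ∧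
      ∀ (q : SchwartzMap (Euc n) ℂ) (r : ℝ), 0 < r →
        eLpNorm (fun η : Euc n => (jap η ^ α : ℝ) • ((χ η : ℂ) * Sr r (⇑q) η)) 2 volume
          ≤ ENNReal.ofReal (C * (1 + r) ^ (-γ)) * (wSobNorm β 1 (⇑q)) ^ 2 := by
  obtain ⟨β', hβ', hββ, h2, hαγ, hγ0⟩ : ∃ β' : ℝ, 0 ≤ β' ∧ β' ≤ β ∧ 2 * β' < (n:ℝ) - 1 ∧
      α ≤ (3 + 2 * β + 2 * β' - n) / 2 ∧ 0 < (3 + 2 * β + 2 * β' - n) / 2 := by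
    have hn' : (2:ℝ) ≤ n := by exact_mod_cast hn
    rcases hrange with ⟨h1, h2, h3⟩ | ⟨h1, h2⟩
    · exact ⟨β, hβ, le_rfl, by linarith, by linarith, by linarith⟩
    · set ε := min (((n:ℝ) - 1) / 2) (β + 1 - α) with hε
      have e1 : ε ≤ ((n:ℝ) - 1) / 2 := min_le_left _ _
      have e2 : ε ≤ β + 1 - α := min_le_right _ _
      have e3 : 0 < ε := lt_min (by linarith) (by linarith)
      exact ⟨((n:ℝ) - 1) / 2 - ε, by linarith, by linarith, by linarith, by linarith, by linarith⟩
  set γ := (3 + 2 * β + 2 * β' - n) / 2 with hγ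
  obtain ⟨C1, hC1, hI⟩ := I_bd hn
  obtain ⟨C2, hC2, hJ⟩ := J_bd hn β' hβ' h2
  set M : ℝ := 4 ^ |α| * 4 ^ (2 * β' + 2 * β + 1) with hM
  have hM0 : 0 < M := by positivity
  set c4 : ℝ≥0∞ := ENNReal.ofReal ((n + 1) * (2 * Real.pi) ^ n) with hc4
  set K : ℝ≥0∞ := ENNReal.ofReal M * C1 * C2 * c4 ^ 2 with hK
  have hKt : K ≠ ⊤ := by finiteness
  refine ⟨γ, √K.toReal + 1, hγ0, by positivity, ?_⟩
  intro q r hr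
  have h1r : 0 < 1 + r := by linarith
  set N := ∫⁻ x, (‖gS β q x‖ₑ ^ 2 + ‖fderiv ℝ (gS β q) x‖ₑ ^ 2) with hN
  set w := wSobNorm β 1 q with hw
  have hNw : N ≤ c4 * w ^ 2 := gS_bound β q
  set D := ENNReal.ofReal (M * (1 + r) ^ (-(2 * γ))) * C1 * N with hD
  have hpt : ∀ η : Euc n, ‖(jap η ^ α : ℝ) • ((χ η : ℂ) * Sr r (⇑q) η)‖ₑ ^ 2 ≤
      ({0}ᶜ : Set (Euc n)).indicator (fun η => D * ∫⁻ θ in {θ | ⟪η, θ⟫ ≤ 0},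
        GG (gS β q) β' ((2⁻¹:ℝ) • (η - (r * ‖η‖) • θ)) θ ∂(sg n)) η := by
    intro η
    rcases lt_or_ge ‖η‖ C₀ with h | h
    · simp [hχ0 η h]
    have hη1 : 1 ≤ ‖η‖ := hC₀.trans h
    have hη0 : η ≠ 0 := by
      rintro rfl
      norm_num at hη1
    rw [indicator_of_mem (by simpa using hη0)]
    have hj : 0 < jap η := lt_of_lt_of_le one_pos (one_le_jap η)
    have hc := hχ01 η
    have b1 : ‖(χ η : ℂ)‖ₑ ≤ 1 := by
      rw [← ofReal_norm, Complex.norm_real, Real.norm_of_nonneg hc.1]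
      simpa using hc.2
    have hb := real_bd n hn α β β' γ hβ hβ' h2 (by rw [hγ]; ring) hαγ r hr η hη1
    have hi := hI β β' hβ' hββ q r hr η hη0
    rw [enorm_smul, enorm_mul, Sr, enorm_smul, Real.enorm_of_nonneg (by positivity),
      Real.enorm_of_nonneg (by positivity)]
    set J := ∫⁻ θ in {θ | ⟪η, θ⟫ ≤ 0}, GG (gS β q) β' ((2⁻¹:ℝ) • (η - (r * ‖η‖) • θ)) θ ∂(sg n)
    set I := ‖∫ ξ, ft q ξ * ft q (η - ξ) ∂(ewaldM n r η)‖ₑ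
    set A := jap η ^ α
    set B := 2 / (‖η‖ * (1 + r))
    set E := (r * ‖η‖ / 2) ^ (n - 1) *
        ((‖η‖ * (1 + r) / 4) ^ (-β) * (r * ‖η‖ / 4) ^ (-β')) ^ 2
    have hA0 : 0 ≤ A := by positivity
    have hB0 : 0 ≤ B := by positivity
    calc _ ≤ (ENNReal.ofReal A * (1 * (ENNReal.ofReal B * I))) ^ 2 := by gcongr
      _ = ENNReal.ofReal (A ^ 2 * B ^ 2) * I ^ 2 := by
          rw [ENNReal.ofReal_mul (by positivity), ENNReal.ofReal_pow hA0, ENNReal.ofReal_pow hB0]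
          ring
      _ ≤ ENNReal.ofReal (A ^ 2 * B ^ 2) * (C1 * N * ENNReal.ofReal E * J) := by gcongr
      _ = ENNReal.ofReal (A ^ 2 * B ^ 2 * E) * C1 * N * J := by
          rw [ENNReal.ofReal_mul (p := A ^ 2 * B ^ 2) (by positivity)]
          ring
      _ ≤ _ := by
          rw [hD]
          gcongr
  have hDt : ∫⁻ η, ‖(jap η ^ α : ℝ) • ((χ η : ℂ) * Sr r (⇑q) η)‖ₑ ^ 2 ≤
      ENNReal.ofReal ((1 + r) ^ (-(2 * γ))) * K * w ^ 4 := by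
    refine (lintegral_mono hpt).trans ?_
    rw [lintegral_indicator (measurableSet_singleton 0).compl]
    have hgN : ∫⁻ x, ‖gS β q x‖ₑ ^ 2 ≤ N := lintegral_mono fun x => le_self_add
    have hNt : N ≠ ⊤ := by
      have k1 := (gS β q).memLp 2 volume
      have k2 := (SchwartzMap.fderivCLM ℝ (Euc n) ℂ (gS β q)).memLp 2 volume
      have k3 := lintegral_rpow_enorm_lt_top_of_eLpNorm_lt_top (by norm_num) (by norm_num) k1.2
      have k4 := lintegral_rpow_enorm_lt_top_of_eLpNorm_lt_top (by norm_num) (by norm_num) k2.2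
      norm_num only [ENNReal.toReal_ofNat, ENNReal.rpow_ofNat] at k3 k4
      have hgc := (gS β q).continuous
      rw [hN, lintegral_add_left (by apply Continuous.measurable; fun_prop)]
      exact ENNReal.add_ne_top.2 ⟨k3.ne, k4.ne⟩
    rw [lintegral_const_mul' _ _ (by finiteness)]
    calc _ ≤ D * (C2 * N) := by
          gcongr
          exact (hJ _ (gS β q).continuous r hr).trans (by gcongr)
      _ = ENNReal.ofReal (M * (1 + r) ^ (-(2 * γ))) * C1 * C2 * N ^ 2 := by rw [hD]; ring
      _ ≤ ENNReal.ofReal (M * (1 + r) ^ (-(2 * γ))) * C1 * C2 * (c4 * w ^ 2) ^ 2 := by gcongr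
      _ = _ := by
          rw [ENNReal.ofReal_mul hM0.le, hK]
          ring
  rw [eLpNorm_eq_lintegral_rpow_enorm_toReal (by norm_num) (by norm_num)]
  norm_num only [ENNReal.toReal_ofNat, ENNReal.rpow_ofNat]
  calc _ ≤ (ENNReal.ofReal ((1 + r) ^ (-(2 * γ))) * K * w ^ 4) ^ (1/2:ℝ) := by
        gcongr
    _ = (ENNReal.ofReal (√K.toReal * (1 + r) ^ (-γ)) ^ 2 * (w ^ 2) ^ 2) ^ (1/2:ℝ) := by
        congr 2
        · rw [← ENNReal.ofReal_pow (by positivity), mul_pow, Real.sq_sqrt (by positivity),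
            ENNReal.ofReal_mul (by positivity), ENNReal.ofReal_toReal hKt,
            ← Real.rpow_mul_natCast h1r.le, mul_comm]
          congr 3
          push_cast
          ring
        · ring
    _ = ENNReal.ofReal (√K.toReal * (1 + r) ^ (-γ)) * w ^ 2 := by
        rw [← mul_pow, ← ENNReal.rpow_natCast, ← ENNReal.rpow_mul]
        norm_num
    _ ≤ _ := by
        gcongr
        linarith
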